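/- arXiv:1010.6278 — 2 statements merged into one kernel-verified Lean document; each statement's English description precedes it below -/
import Mathlib

section
/- For all positive integers m and j, the number of forests F on vertex set {1,…,m} with maximum degree exactly j is at most j · (m e / j^2)^j · |F_m|. Consequently, if j = j(m) satisfies j ≥ εm/ln m for some fixed ε > 0, then the number of forests on {1,…,m} with maximum degree at least j is e^{-Ω(m)} · |F_m|. -/
/-!
Fix a vertex `v` and let `N k` be the number of forests in which `v` has degree `k`. Given a forest
`F` with `deg v = k + 1`, cut off a neighbour `u` of `v` (together with the branch hanging from it)
and reattach `u` to a vertex `w ≠ v` that is still joined to `v` without passing through `u`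
(`switch`). The result is a forest with `deg v = k` in which the component of `v` has the same
vertices. If that component has `r` vertices besides `v`, then each `F` admits at least `k * r`
switches, because for each `w` only the neighbour of `v` leading to `w` is unavailable as `u`
(`reachable_avoiding`). Conversely a switch is recovered from its result and `u`, since `w` is the
neighbour of `u` towards `v` (`switch_inj`), and `u` is one of the `r - k` vertices of the component
not adjacent to `v`. Hence `k * r * N k.succ ≤ (r - k) * N k` when `r` is fixed (`stratum_step`),
and, as `(r - k) / r` increases with `r`, also `k * n * N k.succ ≤ (n - k) * N k` with `n = m - 1`
for all forests together (`withDeg_step`).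

Iterating gives `N (k + 1) ≤ ∏_{i = 1}^{k} (1 - i / n) / k! * |F_m|` (`withDeg_prod`). Pairing the
factors `i` and `k + 1 - i` bounds the product by `(n / (2 * (k + 1))) ^ k` (`prod_sub_bound`), and
`k + 1 ≤ 2 ^ k`, so with `j = k + 1` one gets `N j * j! * j ^ (j - 1) ≤ n ^ (j - 1) * |F_m|`. A union
bound over `v` and `j! ≥ (j / e) ^ j` give the first claim.

For the second claim the product is bounded by `1`, so that a union bound over `v` and over the
degree shows that at most `m ^ 2 / a! * |F_m|` forests have a vertex of degree at least `a + 1`. If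
`a + 1 ≥ ε m / log m` then `a! ≥ (a / e) ^ a ≥ (√m) ^ a ≥ exp (ε m / 4)` for large `m`.
-/


open SimpleGraph Filter Real

def IsBlocker {V : Type*} (G : SimpleGraph V) (B : Set V) : Prop :=
  (G.induce Bᶜ).IsAcyclic

def HasDisjointCycles {V : Type*} (G : SimpleGraph V) (m : ℕ) : Prop :=
  ∃ c : Fin m → (Σ v : V, G.Walk v v),
    (∀ i, (c i).2.IsCycle) ∧
    ∀ i j, i ≠ j → ∀ v, v ∈ (c i).2.support → v ∉ (c j).2.support

noncomputable def apexCount (n k : ℕ) : ℕ :=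
  Nat.card {G : SimpleGraph (Fin n) // ∃ B : Finset (Fin n), B.card ≤ k ∧ IsBlocker G ↑B}

noncomputable def exCount (n k : ℕ) : ℕ :=
  Nat.card {G : SimpleGraph (Fin n) // ¬ HasDisjointCycles G k}

noncomputable def forestCount (n : ℕ) : ℕ :=
  Nat.card {G : SimpleGraph (Fin n) // G.IsAcyclic}

def IsSpike {V : Type*} (G : SimpleGraph V) (u v : V) : Prop :=
  G.Adj u v ∧ (G.neighborSet u).ncard = 1 ∧ (G.neighborSet v).ncard = 2 ∧
  ¬ ∃ a b c : V, a ≠ b ∧ b ≠ c ∧ a ≠ c ∧ G.Adj a b ∧ G.Adj b c ∧ ¬ G.Adj a c ∧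
      (G.connectedComponentMk u).supp = {a, b, c}


/-! ### The switch operation -/

/-- In a forest, distinct neighbours of `u` are separated by `u`. -/
theorem eq_of_adj_of_reachable {V : Type*} {G : SimpleGraph V} (hG : G.IsAcyclic) {u a b : V}
    (ha : G.Adj u a) (hb : G.Adj u b) (hab : (G.deleteIncidenceSet u).Reachable a b) : a = b := by
  by_contra hne
  have h1 := (isAcyclic_iff_forall_adj_isBridge.1 hG) ha
  rw [isBridge_iff] at h1
  apply h1
  have h2 : (G.deleteEdges {s(u, a)}).Adj u b := by
    simp only [deleteEdges_adj, Set.mem_singleton_iff]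
    refine ⟨hb, ?_⟩
    intro h
    simp at h
    grind
  refine h2.reachable.trans (hab.symm.mono ?_)
  intro x y hxy
  rw [deleteIncidenceSet_adj] at hxy
  simp only [deleteEdges_adj, Set.mem_singleton_iff, Sym2.eq_iff]
  grind

/-- `F` with the edge `uv` replaced by the edge `uw`. Deleting all edges at `u` (as
`F.deleteIncidenceSet u`) is used as the encoding of `F - u`, which keeps the vertex type fixed. -/
def switch {V : Type*} (F : SimpleGraph V) (v u w : V) : SimpleGraph V :=
  F.deleteEdges {s(u, v)} ⊔ edge u w

section
variable {V : Type*} {F : SimpleGraph V} {v u w : V}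

theorem not_adj_of_reachable (hF : F.IsAcyclic) (hvu : F.Adj v u) (hwv : w ≠ v)
    (hr : (F.deleteIncidenceSet u).Reachable v w) : ¬ F.Adj u w := fun h =>
  hwv (eq_of_adj_of_reachable hF hvu.symm h hr).symm

theorem ne_of_reachable (hvu : F.Adj v u)
    (hr : (F.deleteIncidenceSet u).Reachable v w) : w ≠ u := by
  rintro rfl
  obtain ⟨x, hx⟩ := hr.nonempty_neighborSet_right hvu.ne
  simp [deleteIncidenceSet_adj] at hx

theorem switch_adj (hvu : F.Adj v u)
    (hr : (F.deleteIncidenceSet u).Reachable v w) (x y : V) : (switch F v u w).Adj x y ↔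
      (F.Adj x y ∧ ¬ (x = u ∧ y = v ∨ x = v ∧ y = u)) ∨ (x = u ∧ y = w ∨ x = w ∧ y = u) := by
  have := ne_of_reachable hvu hr
  simp only [switch, sup_adj, deleteEdges_adj, Set.mem_singleton_iff, Sym2.eq_iff, edge_adj]
  grind

theorem switch_isAcyclic (hF : F.IsAcyclic) (hvu : F.Adj v u)
    (hr : (F.deleteIncidenceSet u).Reachable v w) : (switch F v u w).IsAcyclic := by
  refine (isAcyclic_add_edge_iff_of_not_reachable _ _ ?_).2 (hF.anti (deleteEdges_le _))
  intro h
  have h1 := (isAcyclic_iff_forall_adj_isBridge.1 hF) hvu.symm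
  rw [isBridge_iff] at h1
  apply h1
  refine h.trans (hr.symm.mono ?_)
  intro x y hxy
  rw [deleteIncidenceSet_adj] at hxy
  simp only [deleteEdges_adj, Set.mem_singleton_iff, Sym2.eq_iff]
  grind

theorem switch_deleteIncidenceSet (hvu : F.Adj v u)
    (hr : (F.deleteIncidenceSet u).Reachable v w) :
    (switch F v u w).deleteIncidenceSet u = F.deleteIncidenceSet u := by
  ext x y
  simp only [deleteIncidenceSet_adj, switch_adj hvu hr]
  grind

theorem reachable_of_adj_reachable {G H : SimpleGraph V} (h : ∀ x y, G.Adj x y → H.Reachable x y)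
    {x y : V} (hr : G.Reachable x y) : H.Reachable x y := by
  obtain ⟨p⟩ := hr
  induction p with
  | nil => exact Reachable.refl _
  | cons ha _ ih => exact (h _ _ ha).trans ih

theorem switch_reachable (hvu : F.Adj v u)
    (hr : (F.deleteIncidenceSet u).Reachable v w) (x y : V) :
    (switch F v u w).Reachable x y ↔ F.Reachable x y := by
  have h1 : (switch F v u w).Reachable u v := by
    have : (switch F v u w).Adj u w := by rw [switch_adj hvu hr]; grind
    refine this.reachable.trans ?_
    rw [← switch_deleteIncidenceSet hvu hr] at hr
    exact hr.symm.mono (deleteIncidenceSet_le _ _)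
  have h2 : F.Reachable u w := hvu.symm.reachable.trans (hr.mono (deleteIncidenceSet_le _ _))
  refine ⟨reachable_of_adj_reachable fun a b hab => ?_, reachable_of_adj_reachable fun a b hab => ?_⟩
  · rw [switch_adj hvu hr] at hab
    rcases hab with hab | ⟨rfl, rfl⟩ | ⟨rfl, rfl⟩
    · exact hab.1.reachable
    · exact h2
    · exact h2.symm
  · by_cases h : a = u ∧ b = v ∨ a = v ∧ b = u
    · rcases h with ⟨rfl, rfl⟩ | ⟨rfl, rfl⟩
      · exact h1
      · exact h1.symm
    · exact Adj.reachable (by rw [switch_adj hvu hr]; grind)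

theorem switch_neighborSet (hvu : F.Adj v u) (hwv : w ≠ v)
    (hr : (F.deleteIncidenceSet u).Reachable v w) :
    (switch F v u w).neighborSet v = F.neighborSet v \ {u} := by
  ext x
  have := hvu.ne
  simp only [mem_neighborSet, switch_adj hvu hr]
  grind [mem_neighborSet]

/-- The switch is injective in `(F, w)` for fixed `u` and `v`: in the switched forest, `w` is the only
neighbour of `u` in the component of `v` after the deletion of the edges at `u`. -/
theorem switch_inj {F₁ F₂ : SimpleGraph V} {w₁ w₂ : V} (hF₁ : F₁.IsAcyclic) (hF₂ : F₂.IsAcyclic)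
    (hvu₁ : F₁.Adj v u) (hvu₂ : F₂.Adj v u) (hw₁ : w₁ ≠ v) (hw₂ : w₂ ≠ v)
    (hr₁ : (F₁.deleteIncidenceSet u).Reachable v w₁)
    (hr₂ : (F₂.deleteIncidenceSet u).Reachable v w₂)
    (h : switch F₁ v u w₁ = switch F₂ v u w₂) : F₁ = F₂ ∧ w₁ = w₂ := by
  have hw : w₁ = w₂ := by
    refine eq_of_adj_of_reachable (switch_isAcyclic hF₁ hvu₁ hr₁) (u := u) ?_ ?_ ?_
    · rw [switch_adj hvu₁ hr₁]; grind
    · rw [h, switch_adj hvu₂ hr₂]; grind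
    · rw [switch_deleteIncidenceSet hvu₁ hr₁]
      refine hr₁.symm.trans ?_
      rw [← switch_deleteIncidenceSet hvu₁ hr₁, h, switch_deleteIncidenceSet hvu₂ hr₂]
      exact hr₂
  subst hw
  refine ⟨?_, rfl⟩
  have n1 := not_adj_of_reachable hF₁ hvu₁ hw₁ hr₁
  have n2 := not_adj_of_reachable hF₂ hvu₂ hw₁ hr₂
  ext x y
  have := congrArg (fun G : SimpleGraph V => G.Adj x y) h
  simp only [switch_adj hvu₁ hr₁, switch_adj hvu₂ hr₂] at this
  grind [SimpleGraph.Adj.symm]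

/-- All neighbours of `v` but at most one can be cut off without separating `w` from `v`. -/
theorem reachable_avoiding (hF : F.IsAcyclic) (h : F.Reachable v w) :
    ∃ x, ∀ u, F.Adj v u → u ≠ x → (F.deleteIncidenceSet u).Reachable v w := by
  obtain ⟨p, hp⟩ := h.exists_isPath
  -- the exceptional neighbour is the second vertex of the path from `v` to `w`
  refine ⟨p.snd, fun u hu hne => ?_⟩
  have hs : u ∉ p.support := fun hs => hne (hF.eq_snd_of_adj_start hp hu hs)
  refine ⟨p.transfer _ fun e he => ?_⟩
  rw [edgeSet_deleteIncidenceSet]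
  refine ⟨p.edges_subset_edgeSet he, fun h => hs ?_⟩
  exact p.mem_support_of_mem_edges he h.2

end

/-! ### Counting switches -/

open Classical in
/-- The vertices other than `v` in the component of `v`. -/
noncomputable def compRest {V : Type*} [Fintype V] (F : SimpleGraph V) (v : V) : Finset V :=
  Finset.univ.filter fun w => w ≠ v ∧ F.Reachable v w

open Classical in
/-- The forests in which `v` has degree `k` and its component has `r` vertices besides `v`. -/
noncomputable def stratum {V : Type*} [Fintype V] (v : V) (k r : ℕ) : Finset (SimpleGraph V) :=
  Finset.univ.filter fun F => F.IsAcyclic ∧ (F.neighborSet v).ncard = k ∧ (compRest F v).card = r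

theorem mem_compRest {V : Type*} [Fintype V] {F : SimpleGraph V} {v w : V} :
    w ∈ compRest F v ↔ w ≠ v ∧ F.Reachable v w := by
  simp [compRest]

theorem mem_stratum {V : Type*} [Fintype V] {F : SimpleGraph V} {v : V} {k r : ℕ} :
    F ∈ stratum v k r ↔
      F.IsAcyclic ∧ (F.neighborSet v).ncard = k ∧ (compRest F v).card = r := by
  simp [stratum]

open Classical in
/-- Double counting of switches within a fixed component size. -/
theorem stratum_step {V : Type*} [Fintype V] (v : V) (k r : ℕ) :
    k * r * (stratum v (k + 1) r).card ≤ (r - k) * (stratum v k r).card := by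
  -- `X` is the set of switches `(F, u, w)`, and `Y` the set of possible pairs (result, `u`)
  let X : Finset (Σ _ : SimpleGraph V, V × V) := (stratum v (k + 1) r).sigma fun F =>
    Finset.univ.filter fun p : V × V =>
      F.Adj v p.1 ∧ p.2 ≠ v ∧ (F.deleteIncidenceSet p.1).Reachable v p.2
  let Y : Finset (Σ _ : SimpleGraph V, V) := (stratum v k r).sigma fun F =>
    compRest F v \ (F.neighborSet v).toFinset
  have hX : k * r * (stratum v (k + 1) r).card ≤ X.card := by
    rw [Finset.card_sigma, mul_comm, ← smul_eq_mul]
    refine Finset.card_nsmul_le_sum _ _ _ fun F hF => ?_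
    simp only [stratum, Finset.mem_filter, Finset.mem_univ, true_and] at hF
    obtain ⟨hF, hk, hr⟩ := hF
    rw [Finset.card_eq_sum_card_fiberwise (f := Prod.snd) (t := compRest F v), mul_comm, ← hr,
      ← smul_eq_mul]
    · refine Finset.card_nsmul_le_sum _ _ _ fun w hw => ?_
      simp only [compRest, Finset.mem_filter, Finset.mem_univ, true_and] at hw
      obtain ⟨x, hx⟩ := reachable_avoiding hF hw.2
      have : ((F.neighborSet v).toFinset.erase x).card ≤ _ :=
        Finset.card_le_card_of_injOn (t := ((Finset.univ.filter fun p : V × V =>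
      F.Adj v p.1 ∧ p.2 ≠ v ∧ (F.deleteIncidenceSet p.1).Reachable v p.2).filter
        fun p => p.2 = w)) (fun u => (u, w)) (fun u hu => by
          simp only [Finset.coe_erase, Set.coe_toFinset, Set.mem_sdiff, mem_neighborSet,
            Set.mem_singleton_iff] at hu
          simpa [hu.1, hw.1] using And.intro hu.1 (hx u hu.1 hu.2)) (fun a _ b _ h => by simpa using h)
      have h2 := Finset.pred_card_le_card_erase (s := (F.neighborSet v).toFinset) (a := x)
      rw [← Set.ncard_eq_toFinset_card', hk] at h2
      exact h2.trans this
    · rintro ⟨a, b⟩ h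
      simp only [Finset.coe_filter, Finset.mem_univ, true_and, Set.mem_ofPred_eq] at h
      simp only [compRest, Finset.coe_filter, Finset.mem_univ, true_and, Set.mem_ofPred_eq]
      exact ⟨h.2.1, h.2.2.mono (deleteIncidenceSet_le _ _)⟩
  have hY : Y.card = (r - k) * (stratum v k r).card := by
    rw [Finset.card_sigma, mul_comm, Finset.sum_const_nat]
    intro F hF
    simp only [stratum, Finset.mem_filter, Finset.mem_univ, true_and] at hF
    obtain ⟨hF, hk, hr⟩ := hF
    rw [Finset.card_sdiff_of_subset, hr, ← Set.ncard_eq_toFinset_card', hk]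
    intro x hx
    simp only [Set.mem_toFinset, mem_neighborSet] at hx
    simp only [compRest, Finset.mem_filter, Finset.mem_univ, true_and]
    exact ⟨hx.ne', hx.reachable⟩
  rw [← hY]
  refine hX.trans ?_
  refine Finset.card_le_card_of_injOn (fun t => ⟨switch t.1 v t.2.1 t.2.2, t.2.1⟩) ?_ ?_
  · rintro ⟨F, u, w⟩ h
    simp only [X, stratum, Finset.coe_sigma, Finset.mem_coe, Set.mem_sigma_iff, Finset.mem_filter,
      Finset.mem_univ, true_and] at h
    obtain ⟨⟨hF, hk, hr⟩, hvu, hwv, hrw⟩ := h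
    rw [Finset.mem_coe, Finset.mem_sigma]
    have hc : compRest (switch F v u w) v = compRest F v := by
      ext x
      simp only [mem_compRest, switch_reachable hvu hrw]
    simp only [mem_stratum, Finset.mem_sdiff, Set.mem_toFinset,
      switch_neighborSet hvu hwv hrw, hc, mem_compRest]
    refine ⟨⟨switch_isAcyclic hF hvu hrw, ?_, hr⟩, ⟨hvu.ne', hvu.reachable⟩, by simp⟩
    rw [Set.ncard_sdiff_singleton_of_mem (by exact hvu), hk]
    rfl
  · rintro ⟨F₁, u₁, w₁⟩ h₁ ⟨F₂, u₂, w₂⟩ h₂ h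
    simp only [X, stratum, Finset.coe_sigma, Finset.mem_coe, Set.mem_sigma_iff, Finset.mem_filter,
      Finset.mem_univ, true_and] at h₁ h₂
    simp only [Sigma.mk.injEq, heq_eq_eq] at h
    obtain ⟨h, rfl⟩ := h
    obtain ⟨rfl, rfl⟩ := switch_inj h₁.1.1 h₂.1.1 h₁.2.1 h₂.2.1 h₁.2.2.1 h₂.2.2.1 h₁.2.2.2
      h₂.2.2.2 h
    rfl

theorem card_compRest_le {V : Type*} [Fintype V] (F : SimpleGraph V) (v : V) :
    (compRest F v).card ≤ Fintype.card V - 1 := by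
  classical
  rw [← Finset.card_univ, ← Finset.card_erase_of_mem (Finset.mem_univ v)]
  refine Finset.card_le_card fun w hw => ?_
  simp only [compRest, Finset.mem_filter] at hw
  simp [hw.2.1]

theorem ncard_neighborSet_le {V : Type*} [Fintype V] (F : SimpleGraph V) (v : V) :
    (F.neighborSet v).ncard ≤ (compRest F v).card := by
  classical
  rw [Set.ncard_eq_toFinset_card']
  refine Finset.card_le_card fun x hx => ?_
  simp only [Set.mem_toFinset, mem_neighborSet] at hx
  simp only [compRest, Finset.mem_filter, Finset.mem_univ, true_and]
  exact ⟨hx.ne', hx.reachable⟩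

open Classical in
/-- The forests in which `v` has degree `k`. -/
noncomputable def withDeg {V : Type*} [Fintype V] (v : V) (k : ℕ) : Finset (SimpleGraph V) :=
  Finset.univ.filter fun F => F.IsAcyclic ∧ (F.neighborSet v).ncard = k

theorem card_withDeg {V : Type*} [Fintype V] (v : V) (k : ℕ) :
    (withDeg v k).card = ∑ r ∈ Finset.range (Fintype.card V - 1 + 1), (stratum v k r).card := by
  classical
  rw [Finset.card_eq_sum_card_fiberwise (f := fun F => (compRest F v).card)
    (t := Finset.range (Fintype.card V - 1 + 1))]
  · refine Finset.sum_congr rfl fun r _ => ?_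
    congr 1
    ext F
    simp [withDeg, stratum, and_assoc]
  · intro F _
    simpa [Nat.lt_succ_iff] using card_compRest_le F v

/-- The inequality of `stratum_step`, summed over all component sizes: the ratio `(r - k) / r` is
largest for the largest possible `r`. -/
theorem withDeg_step {V : Type*} [Fintype V] (v : V) (k : ℕ) :
    k * (Fintype.card V - 1) * (withDeg v (k + 1)).card ≤
      (Fintype.card V - 1 - k) * (withDeg v k).card := by
  classical
  rw [card_withDeg, card_withDeg, Finset.mul_sum, Finset.mul_sum]
  refine Finset.sum_le_sum fun r hr => ?_
  set n := Fintype.card V - 1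
  have hrn : r ≤ n := Nat.lt_succ_iff.1 (Finset.mem_range.1 hr)
  have h := stratum_step v k r
  by_cases hkr : k + 1 ≤ r
  · have hr0 : 0 < r := by omega
    refine Nat.le_of_mul_le_mul_left ?_ hr0
    have h3 : n * (r - k) ≤ r * (n - k) := by
      rw [Nat.mul_sub, Nat.mul_sub, mul_comm n r]
      exact Nat.sub_le_sub_left (Nat.mul_le_mul_right k hrn) _
    calc r * (k * n * (stratum v (k + 1) r).card) = n * (k * r * (stratum v (k + 1) r).card) := by
          ring
      _ ≤ n * ((r - k) * (stratum v k r).card) := Nat.mul_le_mul_left _ h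
      _ = n * (r - k) * (stratum v k r).card := by ring
      _ ≤ r * (n - k) * (stratum v k r).card := Nat.mul_le_mul_right _ h3
      _ = _ := by ring
  · have : stratum v (k + 1) r = ∅ := by
      refine Finset.eq_empty_of_forall_notMem fun F hF => ?_
      simp only [stratum, Finset.mem_filter] at hF
      have := ncard_neighborSet_le F v
      omega
    simp [this]

theorem withDeg_prod {V : Type*} [Fintype V] (v : V) (k : ℕ) :
    (withDeg v (k + 1)).card * k.factorial * (Fintype.card V - 1) ^ k ≤
      (∏ i ∈ Finset.range k, (Fintype.card V - 1 - (i + 1))) * (withDeg v 1).card := by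
  induction k with
  | zero => simp
  | succ k ih =>
    have h := withDeg_step v (k + 1)
    set n := Fintype.card V - 1
    rw [Finset.prod_range_succ, Nat.factorial_succ]
    calc (withDeg v (k + 1 + 1)).card * ((k + 1) * k.factorial) * n ^ (k + 1)
        = (k + 1) * n * (withDeg v (k + 1 + 1)).card * (k.factorial * n ^ k) := by ring
      _ ≤ (n - (k + 1)) * (withDeg v (k + 1)).card * (k.factorial * n ^ k) :=
          Nat.mul_le_mul_right _ h
      _ = (n - (k + 1)) * ((withDeg v (k + 1)).card * k.factorial * n ^ k) := by ring
      _ ≤ (n - (k + 1)) * ((∏ i ∈ Finset.range k, (n - (i + 1))) * (withDeg v 1).card) :=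
          Nat.mul_le_mul_left _ ih
      _ = _ := by ring

/-- The product `(n - 1) ⋯ (n - k)` is at most `(n ^ 2 / (2 * (k + 1))) ^ k`: the factors `n - i` and
`n - (k + 1 - i)` have product at most `((2 * n - (k + 1)) / 2) ^ 2`, and
`(2 * n - (k + 1)) * (k + 1) ≤ n ^ 2`. -/
theorem prod_sub_bound (n k : ℕ) :
    2 ^ k * (k + 1) ^ k * ∏ i ∈ Finset.range k, (n - (i + 1)) ≤ n ^ (2 * k) := by
  -- squaring lets each factor be paired with its mirror image
  rw [← Nat.pow_le_pow_iff_left (two_ne_zero)]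
  have h1 : (∏ i ∈ Finset.range k, (n - (i + 1))) ^ 2 =
      ∏ i ∈ Finset.range k, ((n - (i + 1)) * (n - (k - i))) := by
    rw [Finset.prod_mul_distrib, sq]
    congr 1
    rw [← Finset.prod_range_reflect]
    refine Finset.prod_congr rfl fun i hi => ?_
    have := Finset.mem_range.1 hi
    congr 1
    omega
  have h2 : (2 ^ k * (k + 1) ^ k) ^ 2 = ∏ i ∈ Finset.range k, (4 * (k + 1) ^ 2) := by
    rw [Finset.prod_const, Finset.card_range, mul_pow, mul_pow, ← pow_mul, ← pow_mul, ← pow_mul,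
      mul_comm k 2, pow_mul 2 2 k]
    norm_num
  have h3 : (n ^ (2 * k)) ^ 2 = ∏ i ∈ Finset.range k, n ^ 4 := by
    rw [Finset.prod_const, Finset.card_range, ← pow_mul, ← pow_mul]
    congr 1
    ring
  rw [mul_pow, h1, h2, h3, ← Finset.prod_mul_distrib]
  refine Finset.prod_le_prod' fun i hi => ?_
  have hi := Finset.mem_range.1 hi
  by_cases hn : i + 1 ≤ n ∧ k - i ≤ n
  · obtain ⟨a, ha⟩ := Nat.exists_eq_add_of_le hn.1
    obtain ⟨b, hb⟩ := Nat.exists_eq_add_of_le hn.2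
    have e1 : n - (i + 1) = a := by omega
    have e2 : n - (k - i) = b := by omega
    rw [e1, e2]
    have hab : a + b + (k + 1) = 2 * n := by omega
    have h4 : 4 * (a * b) ≤ (a + b) ^ 2 := by
      zify; nlinarith [sq_nonneg ((a : ℤ) - b)]
    have h5 : (a + b) * (k + 1) ≤ n ^ 2 := by
      zify at hab ⊢; nlinarith [sq_nonneg ((a : ℤ) + b - (k + 1))]
    calc 4 * (k + 1) ^ 2 * (a * b) = 4 * (a * b) * (k + 1) ^ 2 := by ring
      _ ≤ (a + b) ^ 2 * (k + 1) ^ 2 := Nat.mul_le_mul_right _ h4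
      _ = ((a + b) * (k + 1)) ^ 2 := by ring
      _ ≤ (n ^ 2) ^ 2 := Nat.pow_le_pow_left h5 2
      _ = n ^ 4 := by ring
  -- otherwise one of the truncated differences vanishes
  · have : (n - (i + 1)) * (n - (k - i)) = 0 := by
      rw [mul_eq_zero]; omega
    simp [this]

open Classical in
/-- The forests on `V`. -/
noncomputable def forests (V : Type*) [Fintype V] : Finset (SimpleGraph V) :=
  Finset.univ.filter fun F => F.IsAcyclic

theorem withDeg_card_le {V : Type*} [Fintype V] (v : V) (k : ℕ) :
    (withDeg v k).card ≤ (forests V).card := by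
  classical
  refine Finset.card_le_card fun F hF => ?_
  simp only [withDeg, forests, Finset.mem_filter] at hF ⊢
  tauto

theorem withDeg_eq_empty {V : Type*} [Fintype V] (v : V) (k : ℕ) (hk : Fintype.card V - 1 < k) :
    withDeg v k = ∅ := by
  refine Finset.eq_empty_of_forall_notMem fun F hF => ?_
  simp only [withDeg, Finset.mem_filter] at hF
  have := ncard_neighborSet_le F v
  have := card_compRest_le F v
  omega

/-! ### Bounds for the number of forests with a given degree at `v` -/
theorem withDeg_factorial {V : Type*} [Fintype V] (v : V) (k : ℕ) :
    (withDeg v (k + 1)).card * k.factorial ≤ (forests V).card := by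
  rcases Nat.eq_zero_or_pos (Fintype.card V - 1) with h0 | hn
  · simp [withDeg_eq_empty v (k + 1) (by omega)]
  have h := withDeg_prod v k
  set n := Fintype.card V - 1
  refine Nat.le_of_mul_le_mul_right ?_ (pow_pos hn k)
  refine h.trans ?_
  rw [mul_comm]
  refine Nat.mul_le_mul (withDeg_card_le v 1) ?_
  calc _ ≤ ∏ i ∈ Finset.range k, n := Finset.prod_le_prod' fun i _ => Nat.sub_le _ _
    _ = n ^ k := by simp

theorem withDeg_sharp {V : Type*} [Fintype V] (v : V) (k : ℕ) :
    (withDeg v (k + 1)).card * (k + 1).factorial * (k + 1) ^ k ≤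
      (Fintype.card V - 1) ^ k * (forests V).card := by
  rcases Nat.eq_zero_or_pos (Fintype.card V - 1) with h0 | hn
  · simp [withDeg_eq_empty v (k + 1) (by omega)]
  have h := withDeg_prod v k
  have h1 := withDeg_card_le v 1
  set n := Fintype.card V - 1
  refine Nat.le_of_mul_le_mul_right ?_ (pow_pos hn k)
  have hk : k + 1 ≤ 2 ^ k := Nat.lt_two_pow_self
  calc (withDeg v (k + 1)).card * (k + 1).factorial * (k + 1) ^ k * n ^ k
      = (k + 1) * ((k + 1) ^ k * ((withDeg v (k + 1)).card * k.factorial * n ^ k)) := by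
        rw [Nat.factorial_succ]; ring
    _ ≤ 2 ^ k * ((k + 1) ^ k * ((∏ i ∈ Finset.range k, (n - (i + 1))) * (forests V).card)) := by
        refine Nat.mul_le_mul hk (Nat.mul_le_mul_left _ ?_)
        exact h.trans (Nat.mul_le_mul_left _ h1)
    _ = (2 ^ k * (k + 1) ^ k * ∏ i ∈ Finset.range k, (n - (i + 1))) * (forests V).card := by ring
    _ ≤ n ^ (2 * k) * (forests V).card := Nat.mul_le_mul_right _ (prod_sub_bound n k)
    _ = _ := by ring

theorem forestCount_eq (m : ℕ) : forestCount m = (forests (Fin m)).card := by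
  classical
  rw [forestCount, Nat.card_eq_fintype_card, Fintype.card_subtype]
  refine congrArg Finset.card (Finset.ext fun F => ?_)
  simp [forests]

theorem pow_self_le (n : ℕ) : (n : ℝ) ^ n ≤ Real.exp n * n.factorial := by
  have := Real.pow_div_factorial_le_exp (n : ℝ) (Nat.cast_nonneg n) n
  rwa [div_le_iff₀ (by positivity)] at this

/-! ### The two claims -/

/-- Union bound over the vertices of degree `j`; the condition that no degree exceeds `j` is simply
dropped. -/
theorem card_exact_le (m j : ℕ) (hj : 1 ≤ j) :
    (Nat.card {F : SimpleGraph (Fin m) // F.IsAcyclic ∧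
          (∀ v, (F.neighborSet v).ncard ≤ j) ∧ (∃ v, (F.neighborSet v).ncard = j)} : ℝ)
        ≤ (j : ℝ) * ((m : ℝ) * Real.exp 1 / (j : ℝ) ^ 2) ^ j * (forestCount m : ℝ) := by
  classical
  obtain ⟨k, rfl⟩ : ∃ k, j = k + 1 := ⟨j - 1, by omega⟩
  rw [forestCount_eq, Nat.card_eq_fintype_card, Fintype.card_subtype]
  set f : ℝ := ((forests (Fin m)).card : ℝ)
  have h1 : ((Finset.univ.filter fun F : SimpleGraph (Fin m) => F.IsAcyclic ∧
      (∀ v, (F.neighborSet v).ncard ≤ k + 1) ∧ (∃ v, (F.neighborSet v).ncard = k + 1)).card) ≤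
      ∑ v : Fin m, (withDeg v (k + 1)).card := by
    refine le_trans (Finset.card_le_card ?_) Finset.card_biUnion_le
    intro F hF
    simp only [Finset.mem_filter, Finset.mem_univ, true_and] at hF
    simp only [Finset.mem_biUnion, withDeg, Finset.mem_filter, Finset.mem_univ, true_and]
    obtain ⟨v, hv⟩ := hF.2.2
    exact ⟨v, hF.1, hv⟩
  have hb : ∀ v : Fin m, ((withDeg v (k + 1)).card : ℝ) ≤
      Real.exp 1 ^ (k + 1) * (m : ℝ) ^ k * f /
        (((k + 1 : ℕ) : ℝ) ^ (k + 1) * ((k + 1 : ℕ) : ℝ) ^ k) := by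
    intro v
    have h := withDeg_sharp v k
    rw [Fintype.card_fin] at h
    have h' : (withDeg v (k + 1)).card * (k + 1).factorial * (k + 1) ^ k ≤
      m ^ k * (forests (Fin m)).card :=
      h.trans (Nat.mul_le_mul_right _ (Nat.pow_le_pow_left (Nat.sub_le _ _) k))
    have h'' : ((withDeg v (k + 1)).card : ℝ) * ((k + 1).factorial : ℝ) * ((k + 1 : ℕ) : ℝ) ^ k ≤
      (m : ℝ) ^ k * f := by
      have := (Nat.cast_le (α := ℝ)).2 h'
      rwa [Nat.cast_mul, Nat.cast_mul, Nat.cast_mul, Nat.cast_pow, Nat.cast_pow] at this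
    rw [le_div_iff₀ (by positivity)]
    have hs := pow_self_le (k + 1)
    rw [← Real.exp_one_pow] at hs
    calc _ = ((k + 1 : ℕ) : ℝ) ^ (k + 1) * (((withDeg v (k + 1)).card : ℝ) * ((k + 1 : ℕ) : ℝ) ^ k) := by
          ring
      _ ≤ Real.exp 1 ^ (k + 1) * ((k + 1).factorial : ℝ) *
          (((withDeg v (k + 1)).card : ℝ) * ((k + 1 : ℕ) : ℝ) ^ k) := by gcongr
      _ = Real.exp 1 ^ (k + 1) * (((withDeg v (k + 1)).card : ℝ) * ((k + 1).factorial : ℝ) *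
          ((k + 1 : ℕ) : ℝ) ^ k) := by ring
      _ ≤ Real.exp 1 ^ (k + 1) * ((m : ℝ) ^ k * f) := by gcongr
      _ = _ := by ring
  calc _ ≤ ((∑ v : Fin m, (withDeg v (k + 1)).card : ℕ) : ℝ) := by exact_mod_cast h1
    _ = ∑ v : Fin m, ((withDeg v (k + 1)).card : ℝ) := by push_cast; rfl
    _ ≤ ∑ v : Fin m, _ := Finset.sum_le_sum fun v _ => hb v
    _ = m * (Real.exp 1 ^ (k + 1) * (m : ℝ) ^ k * f /
          (((k + 1 : ℕ) : ℝ) ^ (k + 1) * ((k + 1 : ℕ) : ℝ) ^ k)) := by simp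
    _ = _ := by
      have : ((k + 1 : ℕ) : ℝ) ≠ 0 := by positivity
      generalize ((k + 1 : ℕ) : ℝ) = x at *
      rw [div_pow, mul_pow]
      field_simp
      ring

theorem card_atLeast_le (m a : ℕ) :
    (Nat.card {F : SimpleGraph (Fin m) // F.IsAcyclic ∧
            ∃ v, a + 1 ≤ (F.neighborSet v).ncard}) * a.factorial ≤ m ^ 2 * forestCount m := by
  classical
  rw [forestCount_eq, Nat.card_eq_fintype_card, Fintype.card_subtype]
  have h1 : ((Finset.univ.filter fun F : SimpleGraph (Fin m) => F.IsAcyclic ∧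
      ∃ v, a + 1 ≤ (F.neighborSet v).ncard).card) ≤
      ∑ p ∈ (Finset.univ : Finset (Fin m)) ×ˢ Finset.Ico a m, (withDeg p.1 (p.2 + 1)).card := by
    refine le_trans (Finset.card_le_card ?_) Finset.card_biUnion_le
    intro F hF
    simp only [Finset.mem_filter, Finset.mem_univ, true_and] at hF
    obtain ⟨hF, v, hv⟩ := hF
    have h2 := (ncard_neighborSet_le F v).trans (card_compRest_le F v)
    rw [Fintype.card_fin] at h2
    simp only [Finset.mem_biUnion, withDeg, Finset.mem_filter, Finset.mem_univ, true_and,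
      Finset.mem_product, Finset.mem_Ico]
    exact ⟨(v, (F.neighborSet v).ncard - 1), ⟨by omega, by omega⟩, hF, by dsimp only; omega⟩
  refine (Nat.mul_le_mul_right _ h1).trans ?_
  rw [Finset.sum_mul]
  refine (Finset.sum_le_card_nsmul _ _ (forests (Fin m)).card fun p hp => ?_).trans ?_
  · refine le_trans ?_ (withDeg_factorial p.1 p.2)
    simp only [Finset.mem_product, Finset.mem_Ico] at hp
    exact Nat.mul_le_mul_left _ (Nat.factorial_le hp.2.1)
  · simp only [Finset.card_product, Finset.card_univ, Fintype.card_fin, Nat.card_Ico, smul_eq_mul,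
      sq]
    gcongr
    omega

/-- The two comparisons of `log m` with powers of `m` on which the second claim rests: the first makes
`ε m / log m` exceed `2 e √m`, the second makes `m ^ 2` at most `exp (ε m / 8)`. -/
theorem eventually_logs (ε : ℝ) (hε : 0 < ε) : ∃ m0 : ℕ, ∀ m ≥ m0, 2 ≤ m ∧
    Real.log m ≤ ε / (2 * Real.exp 1) * √m ∧ Real.log m ≤ ε / 16 * m := by
  have h1 := (isLittleO_log_rpow_atTop (r := 1 / 2) (by norm_num)).bound
    (c := ε / (2 * Real.exp 1)) (by positivity)
  have h2 := (isLittleO_log_rpow_atTop (r := 1) (by norm_num)).bound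
    (c := ε / 16) (by positivity)
  have h := (tendsto_natCast_atTop_atTop (R := ℝ)).eventually (h1.and h2)
  obtain ⟨m0, hm0⟩ := eventually_atTop.1 (h.and (eventually_ge_atTop 2))
  refine ⟨m0, fun m hm => ?_⟩
  obtain ⟨⟨a, b⟩, c⟩ := hm0 m hm
  refine ⟨c, ?_, ?_⟩
  · rw [Real.sqrt_eq_rpow]
    refine (le_abs_self _).trans (a.trans_eq ?_)
    rw [Real.norm_eq_abs, abs_of_nonneg (by positivity)]
  · refine (le_abs_self _).trans (b.trans_eq ?_)
    simp

theorem factorial_lower {ε : ℝ} {m a : ℕ} (hε : 0 < ε) (hm : 2 ≤ m)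
    (h1 : Real.log m ≤ ε / (2 * Real.exp 1) * √m)
    (ha : ε * m / Real.log m ≤ ((a + 1 : ℕ) : ℝ)) : Real.exp (ε / 4 * m) ≤ a.factorial := by
  have hm' : (2 : ℝ) ≤ m := by exact_mod_cast hm
  have hlog : 0 < Real.log m := Real.log_pos (by linarith)
  have hs : 0 < √(m : ℝ) := Real.sqrt_pos.2 (by linarith)
  have hs1 : 1 ≤ √(m : ℝ) := Real.one_le_sqrt.2 (by linarith)
  have he : 1 ≤ Real.exp 1 := Real.one_le_exp (by norm_num)
  have hy : 2 * (Real.exp 1 * √m) ≤ ε * m / Real.log m := by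
    rw [le_div_iff₀ hlog]
    calc 2 * (Real.exp 1 * √m) * Real.log m
        ≤ 2 * (Real.exp 1 * √m) * (ε / (2 * Real.exp 1) * √m) := by gcongr
      _ = ε * (√m * √m) := by field_simp
      _ = ε * m := by rw [Real.mul_self_sqrt (by linarith)]
  push_cast at ha
  have h1' : 1 ≤ Real.exp 1 * √m := by nlinarith
  have ha1 : Real.exp 1 * √m ≤ a := by linarith
  have ha2 : ε * m / Real.log m / 2 ≤ a := by linarith
  have h3 := pow_self_le a
  have h4 : (√(m : ℝ)) ^ a ≤ a.factorial := by
    have : (Real.exp 1 * √m) ^ a ≤ (a : ℝ) ^ a := by gcongr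
    rw [mul_pow, Real.exp_one_pow] at this
    exact le_of_mul_le_mul_left (this.trans h3) (Real.exp_pos _)
  refine le_trans ?_ h4
  rw [← Real.exp_log hs, ← Real.exp_nat_mul, Real.log_sqrt (by linarith)]
  refine Real.exp_le_exp.2 ?_
  calc ε / 4 * m = ε * m / Real.log m / 2 * (Real.log m / 2) := by field_simp; norm_num
    _ ≤ _ := by gcongr

/-- the number of forests on {1,…,m} with maximum degree exactly j is at
most j (me/j²)^j |F_m|; and if j(m) ≥ εm/ln m then the number of forests with maximum
degree at least j(m) is e^{-Ω(m)} |F_m|. -/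
theorem stmt_15 :
    (∀ m j : ℕ, 1 ≤ m → 1 ≤ j →
      (Nat.card {F : SimpleGraph (Fin m) // F.IsAcyclic ∧
          (∀ v, (F.neighborSet v).ncard ≤ j) ∧ (∃ v, (F.neighborSet v).ncard = j)} : ℝ)
        ≤ (j : ℝ) * ((m : ℝ) * Real.exp 1 / (j : ℝ) ^ 2) ^ j * (forestCount m : ℝ)) ∧
    (∀ ε : ℝ, 0 < ε → ∀ j : ℕ → ℕ,
      (∀ m : ℕ, 2 ≤ m → ε * m / Real.log m ≤ (j m : ℝ)) →
      ∃ c : ℝ, 0 < c ∧ ∃ m0 : ℕ, ∀ m ≥ m0,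
        (Nat.card {F : SimpleGraph (Fin m) // F.IsAcyclic ∧
            ∃ v, j m ≤ (F.neighborSet v).ncard} : ℝ)
          ≤ Real.exp (-c * m) * (forestCount m : ℝ)) := by
  refine ⟨fun m j _ hj => card_exact_le m j hj, fun ε hε j hj => ?_⟩
  obtain ⟨m0, hm0⟩ := eventually_logs ε hε
  refine ⟨ε / 8, by positivity, m0, fun m hm => ?_⟩
  obtain ⟨hm2, hl1, hl2⟩ := hm0 m hm
  have hm' : (2 : ℝ) ≤ m := by exact_mod_cast hm2
  have hlog : 0 < Real.log m := Real.log_pos (by linarith)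
  have hjm := hj m hm2
  have hj0 : 0 < j m := by
    have : (0 : ℝ) < j m := lt_of_lt_of_le (by positivity) hjm
    exact_mod_cast this
  obtain ⟨a, ha⟩ : ∃ a, j m = a + 1 := ⟨j m - 1, by omega⟩
  rw [ha] at hjm ⊢
  have hfac := factorial_lower hε hm2 hl1 hjm
  have hcount : (Nat.card {F : SimpleGraph (Fin m) // F.IsAcyclic ∧
            ∃ v, a + 1 ≤ (F.neighborSet v).ncard} : ℝ) * a.factorial
            ≤ (m : ℝ) ^ 2 * forestCount m := by
    exact_mod_cast card_atLeast_le m a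
  have hsq : (m : ℝ) ^ 2 ≤ Real.exp (ε / 8 * m) := by
    rw [← Real.exp_log (show (0 : ℝ) < m by linarith), ← Real.exp_nat_mul,
      Real.exp_log (show (0 : ℝ) < m by linarith)]
    refine Real.exp_le_exp.2 ?_
    push_cast
    linarith
  refine le_of_mul_le_mul_right ?_ (Real.exp_pos (ε / 4 * m))
  calc _ ≤ (Nat.card {F : SimpleGraph (Fin m) // F.IsAcyclic ∧
            ∃ v, a + 1 ≤ (F.neighborSet v).ncard} : ℝ) * a.factorial := by gcongr
    _ ≤ (m : ℝ) ^ 2 * forestCount m := hcount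
    _ ≤ Real.exp (ε / 8 * m) * forestCount m := by gcongr
    _ = Real.exp (-(ε / 8) * m) * forestCount m * Real.exp (ε / 4 * m) := by
      rw [mul_right_comm, ← Real.exp_add]
      congr 2
      ring
end

section
/- Let k ≥ 1 be an integer and let D^{(k-1)} denote the class of graphs all of whose connected components have a blocker of size at most k−1. Then D^{(k-1)} has growth constant 2^{k−1} e; that is, (|D^{(k-1)}_n| / n!)^{1/n} → 2^{k−1} e as n → ∞. -/
/-! Put `j = k - 1`.

Lower bound. A tree on `m` vertices together with `j` apex vertices, joined to the tree arbitrarily,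
has a blocker of size `j`, hence so does each component. By Cayley's bound `m ^ (m - 2)` on the number
of trees (`le_card_isRanked`, proved by induction on the set of children of the roots) this gives
at least `m ^ (m - 2) * 2 ^ (j * m)` graphs on `n = m + j` vertices, which is `n! * (2 ^ j * e) ^ n`
up to a polynomial factor.

Upper bound. A component on `s` vertices with a blocker of size at most `j` is determined by the
blocker, a parent map of the remaining forest, and the neighbours of each vertex in the blocker, so
there are at most `s ^ j * s ^ s * 2 ^ (j * s)` of them (`card_isEnc_le`). Splitting off the component
of a fixed vertex turns this into a recursive inequality for the number of graphs
(`card_allEnc_le_sum`). It plays the part of the exponential formula: below the radius of convergence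
of the component series it yields `card ≤ K * n! * y ^ n` for every `y > 2 ^ j * e`
(`exists_card_allEnc_le`). -/

open SimpleGraph Filter Real

/-! ### Encoding a component with a small blocker -/

/-- A forest is described by a single self-map of its vertices: root every component and send each
vertex to its neighbour on the path to the root (a root is sent to itself). -/
theorem exists_parent_of_isAcyclic {W : Type*} {H : SimpleGraph W} (hH : H.IsAcyclic) :
    ∃ f : W → W, ∀ x y, H.Adj x y ↔ x ≠ y ∧ (y = f x ∨ x = f y) := by
  classical
  have hr : ∀ v, H.Reachable v (H.connectedComponentMk v).out := fun v =>
    (ConnectedComponent.exact (Quot.out_eq (H.connectedComponentMk v))).symm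
  have key : ∀ v, ∃ p : H.Walk v (H.connectedComponentMk v).out, p.IsPath :=
    fun v => (hr v).exists_isPath
  choose p hp using key
  have hadj : ∀ x, x ≠ (p x).snd → H.Adj x (p x).snd := by
    intro x hx
    apply Walk.adj_snd
    intro hnil
    apply hx
    rw [Walk.snd, Walk.getVert_of_length_le _ (by rw [Walk.length_eq_zero_iff.2 hnil]; omega)]
    exact hnil.eq
  refine ⟨fun v => (p v).snd, fun x y => ⟨fun h => ⟨h.ne, ?_⟩, ?_⟩⟩
  · by_cases hy : y ∈ (p x).support
    · exact Or.inl (hH.eq_snd_of_adj_start (hp x) h hy)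
    · right
      have hc : H.connectedComponentMk x = H.connectedComponentMk y :=
        ConnectedComponent.sound h.reachable
      have : ∃ q : H.Walk x (H.connectedComponentMk y).out, q.IsPath ∧ y ∉ q.support := by
        rw [← hc]; exact ⟨p x, hp x, hy⟩
      obtain ⟨q, hq, hyq⟩ := this
      have hx : x ∈ (p y).reverse.support :=
        hH.mem_support_of_ne_mem_support_of_adj_of_isPath (hp y).reverse hq.reverse h.symm
          (by simpa using hyq)
      exact hH.eq_snd_of_adj_start (hp y) h.symm (by simpa using hx)
  · rintro ⟨hne, h | h⟩
    · rw [h]; exact hadj x (by simpa [← h] using hne)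
    · rw [h]; exact (hadj y (by simpa [← h] using hne.symm)).symm

/-- The graph described by a list `b` of `j` special vertices, a parent map `f`, and for every
vertex `x` the set `T x` of indices `i` for which `x` is joined to `b i`. Loops are discarded, so a
fixed point of `f` contributes no edge. -/
def encGraph {j : ℕ} {W : Type*} (b : Fin j → W) (f : W → W) (T : W → Set (Fin j)) :
    SimpleGraph W :=
  SimpleGraph.fromRel (fun x y => y = f x ∨ ∃ i, y = b i ∧ i ∈ T x)

/-- `H` is described by `j` special vertices, a parent map and adjacency sets. Every graph with a
blocker of size at most `j` has this form, and the number of descriptions is of the right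
exponential order. -/
def IsEnc (j : ℕ) {W : Type*} (H : SimpleGraph W) : Prop :=
  ∃ (b : Fin j → W) (f : W → W) (T : W → Set (Fin j)), H = encGraph b f T

/-- The special vertices list the blocker, with repetitions when it has fewer than `j` elements;
the parent map is that of the forest left after deleting it. -/
theorem IsEnc.of_blocker {j : ℕ} {W : Type*} [Nonempty W] {H : SimpleGraph W} (B : Finset W)
    (hB : B.card ≤ j) (h : (H.induce (B : Set W)ᶜ).IsAcyclic) : IsEnc j H := by
  classical
  obtain ⟨g, hg⟩ := exists_parent_of_isAcyclic h
  have hb : ∃ b : Fin j → W, ∀ x ∈ B, ∃ i, x = b i := by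
    refine ⟨fun i => if hi : (i : ℕ) < B.card then (B.equivFin.symm ⟨i, hi⟩ : W)
      else Classical.arbitrary W, fun x hx => ?_⟩
    refine ⟨⟨B.equivFin ⟨x, hx⟩, lt_of_lt_of_le (Fin.is_lt _) hB⟩, ?_⟩
    simp
  obtain ⟨b, hb⟩ := hb
  refine ⟨b, fun x => if hx : x ∈ B then x else (g ⟨x, by simpa using hx⟩ : W),
    fun x => {i | H.Adj x (b i)}, ?_⟩
  ext x y
  have hout : ∀ x y (hx : x ∉ B) (hy : y ∉ B), H.Adj x y ↔ x ≠ y ∧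
      (y = g ⟨x, by simpa using hx⟩ ∨ x = g ⟨y, by simpa using hy⟩) := by
    intro x y hx hy
    have := hg ⟨x, by simpa using hx⟩ ⟨y, by simpa using hy⟩
    simpa [Subtype.ext_iff] using this
  have hnot : ∀ z, (g z : W) ∉ B := fun z => fun hz => (g z).2 (by simpa using hz)
  simp only [encGraph, SimpleGraph.fromRel_adj, Set.mem_ofPred_eq]
  constructor
  · intro hxy
    refine ⟨hxy.ne, ?_⟩
    by_cases hy : y ∈ B
    · obtain ⟨i, rfl⟩ := hb y hy
      exact Or.inl (Or.inr ⟨i, rfl, hxy⟩)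
    by_cases hx : x ∈ B
    · obtain ⟨i, rfl⟩ := hb x hx
      exact Or.inr (Or.inr ⟨i, rfl, hxy.symm⟩)
    rcases ((hout x y hx hy).1 hxy).2 with h | h
    · left; left; rw [dif_neg hx]; exact h
    · right; left; rw [dif_neg hy]; exact h
  · have main : ∀ x y, x ≠ y → ((y = if hx : x ∈ B then x else (g ⟨x, by simpa using hx⟩ : W)) ∨
        ∃ i, y = b i ∧ H.Adj x (b i)) → H.Adj x y := by
      rintro x y hne (h | ⟨i, rfl, h⟩)
      · by_cases hx : x ∈ B
        · rw [dif_pos hx] at h; exact absurd h.symm hne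
        · rw [dif_neg hx] at h
          have hy : y ∉ B := h ▸ hnot _
          exact (hout x y hx hy).2 ⟨hne, Or.inl h⟩
      · exact h
    rintro ⟨hne, h | h⟩
    · exact main x y hne h
    · exact (main y x hne.symm h).symm

theorem IsEnc.iso {j : ℕ} {W W' : Type*} {H : SimpleGraph W} {H' : SimpleGraph W'} (e : H ≃g H')
    (h : IsEnc j H') : IsEnc j H := by
  obtain ⟨b, f, T, hH⟩ := h
  refine ⟨fun i => e.symm (b i), fun x => e.symm (f (e x)), fun x => T (e x), ?_⟩
  have hs : ∀ (x : W) (z : W'), x = e.symm z ↔ e x = z := by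
    intro x z
    constructor
    · rintro rfl; simp
    · rintro rfl; simp
  ext x y
  rw [← e.map_adj_iff, show ∀ a c, H'.Adj a c ↔ (encGraph b f T).Adj a c by simp [hH]]
  simp only [encGraph, SimpleGraph.fromRel_adj, ne_eq, EmbeddingLike.apply_eq_iff_eq]
  simp only [hs]

theorem card_isEnc_le (j : ℕ) (W : Type) [Finite W] :
    Nat.card {H : SimpleGraph W // IsEnc j H} ≤
      Nat.card W ^ j * (Nat.card W ^ Nat.card W * (2 ^ j) ^ Nat.card W) := by
  classical
  have hsurj : Function.Surjective
      (fun t : (Fin j → W) × (W → W) × (W → Set (Fin j)) =>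
        (⟨encGraph t.1 t.2.1 t.2.2, t.1, t.2.1, t.2.2, rfl⟩ :
          {H : SimpleGraph W // IsEnc j H})) := by
    rintro ⟨H, b, f, T, rfl⟩
    exact ⟨(b, f, T), rfl⟩
  have := Nat.card_le_card_of_surjective _ hsurj
  have h2 : Nat.card (Set (Fin j)) = 2 ^ j := by
    rw [Nat.card_eq_fintype_card, Fintype.card_set, Fintype.card_fin]
  simpa [Nat.card_prod, Nat.card_fun, h2] using this

/-- Every connected component of `G` satisfies `IsEnc j`. -/
def AllEnc (j : ℕ) {V : Type*} (G : SimpleGraph V) : Prop :=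
  ∀ C : G.ConnectedComponent, IsEnc j (G.induce C.supp)

theorem allEnc_of_blockers {j n : ℕ} {G : SimpleGraph (Fin n)}
    (h : ∀ C : G.ConnectedComponent,
      ∃ B : Finset (Fin n), (B : Set (Fin n)) ⊆ C.supp ∧ B.card ≤ j ∧
        (G.induce (C.supp \ (B : Set (Fin n)))).IsAcyclic) : AllEnc j G := by
  classical
  intro C
  obtain ⟨B, -, hB, hac⟩ := h C
  have : Nonempty C.supp := C.nonempty_supp.to_subtype
  refine IsEnc.of_blocker (B.subtype (· ∈ C.supp)) ?_ ?_
  · rw [Finset.card_subtype]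
    exact (Finset.card_filter_le _ _).trans hB
  · let φ : (G.induce C.supp).induce ((B.subtype (· ∈ C.supp) : Finset C.supp) : Set C.supp)ᶜ →g
        G.induce (C.supp \ (B : Set (Fin n))) :=
      { toFun := fun x => ⟨x.1.1, x.1.2, fun hx => x.2 (by simpa using hx)⟩
        map_rel' := fun {a b} hab => hab }
    refine hac.comap φ ?_
    rintro ⟨⟨a, ha⟩, ha'⟩ ⟨⟨b, hb⟩, hb'⟩ hab
    have h1 : a = b := congrArg Subtype.val hab
    subst h1
    rfl

theorem allEnc_induce_compl {j : ℕ} {V : Type*} {G : SimpleGraph V} (h : AllEnc j G)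
    (C : G.ConnectedComponent) : AllEnc j (G.induce C.suppᶜ) := by
  intro C'
  induction C' using ConnectedComponent.ind with | _ v
  have hval : ∀ x : ↥(C.suppᶜ), (x ∈ ((G.induce C.suppᶜ).connectedComponentMk v).supp ↔
      x.1 ∈ (G.connectedComponentMk v.1).supp) := by
    intro x
    simp only [ConnectedComponent.mem_supp_iff, ConnectedComponent.eq]
    constructor
    · intro hr
      exact hr.map (Embedding.induce (C.suppᶜ)).toHom
    · rintro ⟨p⟩
      have : ∀ (a b : V) (p : G.Walk a b) (ha : a ∈ C.suppᶜ) (hb : b ∈ C.suppᶜ),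
          (G.induce C.suppᶜ).Reachable ⟨a, ha⟩ ⟨b, hb⟩ := by
        intro a b p
        induction p with
        | nil => intro _ _; rfl
        | @cons a c b hac p ih =>
          intro ha hb
          have hc : c ∈ C.suppᶜ := fun hc => ha (by
            rw [ConnectedComponent.mem_supp_iff] at hc ⊢
            rw [← hc]; exact ConnectedComponent.sound hac.reachable)
          have h1 : (G.induce C.suppᶜ).Adj ⟨a, ha⟩ ⟨c, hc⟩ := hac
          exact h1.reachable.trans (ih hc hb)
      exact this _ _ p x.2 v.2
  have hmem : ∀ x : V, x ∈ (G.connectedComponentMk v.1).supp → x ∈ C.suppᶜ := by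
    intro x hx hxC
    rw [ConnectedComponent.mem_supp_iff] at hx hxC
    exact v.2 (by rw [ConnectedComponent.mem_supp_iff, ← hx, hxC])
  refine IsEnc.iso ?_ (h (G.connectedComponentMk v.1))
  exact
    { toFun := fun x => ⟨x.1.1, (hval x.1).1 x.2⟩
      invFun := fun x => ⟨⟨x.1, hmem _ x.2⟩, (hval _).2 x.2⟩
      left_inv := fun x => rfl
      right_inv := fun x => rfl
      map_rel_iff' := Iff.rfl }

/-! ### Upper bound: splitting off the component of a vertex -/

/-- A graph is determined by the vertex set `S` of the component of `v₀`, the graph on `S`, and the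
graph on the complement of `S`, which still satisfies `AllEnc j`. -/
theorem card_allEnc_le_sum (j : ℕ) {V : Type} [Fintype V] [DecidableEq V] (v₀ : V) :
    Nat.card {G : SimpleGraph V // AllEnc j G} ≤
      ∑ S : {S : Finset V // v₀ ∈ S},
        Nat.card {H : SimpleGraph ↥(S.1 : Set V) // IsEnc j H} *
          Nat.card {H : SimpleGraph ↥((S.1 : Set V)ᶜ) // AllEnc j H} := by
  classical
  let E : {G : SimpleGraph V // AllEnc j G} → Σ S : {S : Finset V // v₀ ∈ S},
      {H : SimpleGraph ↥(S.1 : Set V) // IsEnc j H} ×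
        {H : SimpleGraph ↥((S.1 : Set V)ᶜ) // AllEnc j H} := fun G =>
    ⟨⟨(G.1.connectedComponentMk v₀).supp.toFinset, by simp⟩,
      ⟨G.1.induce _, by rw [Set.coe_toFinset]; exact G.2 _⟩,
      ⟨G.1.induce _, by rw [Set.coe_toFinset]; exact allEnc_induce_compl G.2 _⟩⟩
  let D : (Σ S : {S : Finset V // v₀ ∈ S},
      {H : SimpleGraph ↥(S.1 : Set V) // IsEnc j H} ×
        {H : SimpleGraph ↥((S.1 : Set V)ᶜ) // AllEnc j H}) → SimpleGraph V := fun t =>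
    t.2.1.1.map (Function.Embedding.subtype _) ⊔ t.2.2.1.map (Function.Embedding.subtype _)
  have hDE : ∀ G, D (E G) = G.1 := by
    intro G
    ext x y
    have hxy : G.1.Adj x y → (G.1.Reachable x v₀ ↔ G.1.Reachable y v₀) := fun h =>
      ⟨fun h' => h.symm.reachable.trans h', fun h' => h.reachable.trans h'⟩
    simp only [D, E, SimpleGraph.sup_adj, SimpleGraph.map_adj]
    constructor
    · rintro (⟨a, b, hab, rfl, rfl⟩ | ⟨a, b, hab, rfl, rfl⟩) <;> exact hab
    · intro h
      by_cases hx : G.1.Reachable x v₀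
      · exact Or.inl ⟨⟨x, by simpa using hx⟩, ⟨y, by simpa using (hxy h).1 hx⟩, h, rfl, rfl⟩
      · exact Or.inr ⟨⟨x, by simpa using hx⟩, ⟨y, by simpa using fun h' => hx ((hxy h).2 h')⟩,
          h, rfl, rfl⟩
  have hinj : Function.Injective E := by
    intro G G' h
    apply Subtype.ext
    rw [← hDE G, ← hDE G', h]
  have := Nat.card_le_card_of_injective E hinj
  rw [Nat.card_sigma] at this
  simpa [Nat.card_prod] using this

/-- The crude bound `2 ^ (n * n)` on the number of all graphs, for the finitely many small cases
of the induction in `exists_card_allEnc_le`. -/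
theorem card_allEnc_le_trivial (j : ℕ) (V : Type) [Finite V] :
    Nat.card {G : SimpleGraph V // AllEnc j G} ≤ (2 ^ Nat.card V) ^ Nat.card V := by
  have hinj : Function.Injective
      (fun (G : {G : SimpleGraph V // AllEnc j G}) (v : V) => G.1.neighborSet v) := by
    intro G G' h
    apply Subtype.ext
    ext x y
    have := congrFun h x
    simp only at this
    rw [← SimpleGraph.mem_neighborSet, this, SimpleGraph.mem_neighborSet]
  have := Nat.card_le_card_of_injective _ hinj
  have h2 : Nat.card (Set V) = 2 ^ Nat.card V := by
    classical
    have := Fintype.ofFinite V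
    rw [Nat.card_eq_fintype_card, Fintype.card_set, Nat.card_eq_fintype_card]
  rwa [Nat.card_fun, h2] at this

theorem sum_finset_mem_eq {V : Type} [Fintype V] [DecidableEq V] (v₀ : V) (n : ℕ)
    (hn : Fintype.card V = n + 1) (g : ℕ → ℝ) :
    ∑ S : {S : Finset V // v₀ ∈ S}, g (S.1.card) =
      ∑ a ∈ Finset.range (n + 1), (n.choose a : ℝ) * g (a + 1) := by
  have h1 : ((Finset.univ : Finset V).erase v₀).card = n := by
    rw [Finset.card_erase_of_mem (Finset.mem_univ _), Finset.card_univ, hn]; rfl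
  have h2 := Finset.sum_powerset_apply_card (fun a => g (a + 1))
    (x := (Finset.univ : Finset V).erase v₀)
  rw [h1] at h2
  simp only [nsmul_eq_mul] at h2
  rw [← h2]
  refine Finset.sum_bij' (fun S _ => S.1.erase v₀)
    (fun A _ => ⟨insert v₀ A, Finset.mem_insert_self _ _⟩) ?_ ?_ ?_ ?_ ?_
  · intro S _
    exact Finset.mem_powerset.2 (Finset.erase_subset_erase _ (Finset.subset_univ _))
  · intro A _; exact Finset.mem_univ _
  · intro S _
    exact Subtype.ext (Finset.insert_erase S.2)
  · intro A hA
    exact Finset.erase_insert fun h => by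
      simpa using Finset.mem_powerset.1 hA h
  · intro S _
    rw [Finset.card_erase_add_one S.2]

/-- Writing `c s = s ^ j * s ^ s * 2 ^ (j * s)` for the bound on the number of components on `s`
vertices, the splitting inequality becomes `d n * n ≤ ∑ s, (c s * s / s!) * d (n - s)` for
`d n = card / n!`. The series `∑ s, (c s * s / s!) * y ^ (-s)` converges for `y > 2 ^ j * e`, so
once `n` exceeds its sum the bound `d n ≤ K * y ^ n` propagates by strong induction. -/
theorem exists_card_allEnc_le (j : ℕ) (y : ℝ) (hy : 2 ^ j * Real.exp 1 < y) :
    ∃ K : ℝ, 0 < K ∧ ∀ (n : ℕ) (V : Type) [Finite V], Nat.card V = n →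
      (Nat.card {G : SimpleGraph V // AllEnc j G} : ℝ) ≤ K * n.factorial * y ^ n := by
  classical
  have hy0 : 0 < y := lt_trans (by positivity) hy
  set q : ℝ := 2 ^ j * Real.exp 1 / y with hq
  have hq0 : 0 ≤ q := by positivity
  have hq1 : q < 1 := (div_lt_one hy0).2 hy
  have hsum : Summable (fun s : ℕ => (s : ℝ) ^ (j + 1) * q ^ s) :=
    summable_pow_mul_geometric_of_norm_lt_one (j + 1) (by rwa [Real.norm_of_nonneg hq0])
  set σ : ℝ := ∑' s : ℕ, (s : ℝ) ^ (j + 1) * q ^ s with h_sig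
  obtain ⟨N, hN⟩ := exists_nat_ge σ
  set K : ℝ := ∑ m ∈ Finset.range (N + 1), ((2 : ℝ) ^ m) ^ m / (m.factorial * y ^ m) with hK
  have hK0 : 0 < K := Finset.sum_pos (fun m _ => by positivity) ⟨0, by simp⟩
  refine ⟨K, hK0, ?_⟩
  intro n
  induction n using Nat.strong_induction_on with
  | _ n ih =>
  intro V _ hV
  have := Fintype.ofFinite V
  -- The constant `K` was chosen as a sum so that it dominates each of the small cases `n ≤ N`.
  by_cases hnN : n ≤ N
  · have h1 : (Nat.card {G : SimpleGraph V // AllEnc j G} : ℝ) ≤ ((2 : ℝ) ^ n) ^ n := by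
      have := card_allEnc_le_trivial j V
      rw [hV] at this
      exact_mod_cast this
    have h2 : ((2 : ℝ) ^ n) ^ n / (n.factorial * y ^ n) ≤ K :=
      Finset.single_le_sum (f := fun m : ℕ => ((2 : ℝ) ^ m) ^ m / (m.factorial * y ^ m))
        (fun m _ => by positivity) (Finset.mem_range.2 (by omega))
    rw [div_le_iff₀ (by positivity)] at h2
    linarith
  · obtain ⟨m, rfl⟩ : ∃ m, n = m + 1 := ⟨n - 1, by omega⟩
    have hne : Nonempty V := by
      rw [← Nat.card_pos_iff.trans (and_iff_left ‹Finite V›)]; omega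
    obtain ⟨v₀⟩ := hne
    have hVc : Fintype.card V = m + 1 := by rw [← Nat.card_eq_fintype_card, hV]
    set g : ℕ → ℝ := fun s => ((s : ℝ) ^ j * ((s : ℝ) ^ s * (2 ^ j) ^ s)) *
      (K * (m + 1 - s).factorial * y ^ (m + 1 - s)) with hg
    calc (Nat.card {G : SimpleGraph V // AllEnc j G} : ℝ)
        ≤ ((∑ S : {S : Finset V // v₀ ∈ S},
        Nat.card {H : SimpleGraph ↥(S.1 : Set V) // IsEnc j H} *
          Nat.card {H : SimpleGraph ↥((S.1 : Set V)ᶜ) // AllEnc j H} : ℕ) : ℝ) := by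
          exact_mod_cast card_allEnc_le_sum j v₀
      _ ≤ ∑ S : {S : Finset V // v₀ ∈ S}, g S.1.card := by
          push_cast
          refine Finset.sum_le_sum fun S _ => ?_
          have hSc : Nat.card ↥(S.1 : Set V) = S.1.card := by simp
          have hScc : Nat.card ↥((S.1 : Set V)ᶜ) = m + 1 - S.1.card := by
            rw [← hVc, ← Finset.card_compl, ← Finset.coe_compl,
              Nat.card_coe_set_eq, Set.ncard_coe_finset]
          have hpos : 0 < S.1.card := Finset.card_pos.2 ⟨v₀, S.2⟩
          refine mul_le_mul ?_ (ih _ (by omega) _ hScc) (by positivity) (by positivity)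
          have := card_isEnc_le j ↥(S.1 : Set V)
          rw [hSc] at this
          exact_mod_cast this
      _ = ∑ a ∈ Finset.range (m + 1), (m.choose a : ℝ) * g (a + 1) :=
          sum_finset_mem_eq v₀ m hVc g
      _ ≤ ∑ a ∈ Finset.range (m + 1), (m.factorial * K * y ^ (m + 1)) *
            (((a + 1 : ℕ) : ℝ) ^ (j + 1) * q ^ (a + 1)) := by
          refine Finset.sum_le_sum fun a ha => ?_
          have ham : a ≤ m := by simpa [Nat.lt_succ_iff] using ha
          have hch : (m.choose a : ℝ) * (m - a).factorial = m.factorial / a.factorial := by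
            rw [eq_div_iff (by positivity)]
            have := Nat.choose_mul_factorial_mul_factorial ham
            rw [← this]; push_cast; ring
          -- The factor `e` of the growth rate comes from `s ^ s / s! ≤ e ^ s`.
          have hexp : ((a + 1 : ℕ) : ℝ) ^ (a + 1) / (a + 1).factorial ≤ Real.exp 1 ^ (a + 1) := by
            rw [← Real.exp_nat_mul, mul_one]
            exact Real.pow_div_factorial_le_exp _ (Nat.cast_nonneg _) _
          have hyp : y ^ (m - a) = y ^ (m + 1) / y ^ (a + 1) := by
            rw [eq_div_iff (by positivity), ← pow_add]; congr 1; omega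
          have e1 : (m.choose a : ℝ) * g (a + 1) = (m.factorial * K * y ^ (m + 1)) *
              (((a + 1 : ℕ) : ℝ) ^ (j + 1) * ((2 ^ j) ^ (a + 1) / y ^ (a + 1)) *
               (((a + 1 : ℕ) : ℝ) ^ (a + 1) / (a + 1).factorial)) := by
            simp only [hg, Nat.add_sub_add_right]
            calc _ = ((m.choose a : ℝ) * (m - a).factorial) * K * y ^ (m - a) *
                  (((a + 1 : ℕ) : ℝ) ^ j * (((a + 1 : ℕ) : ℝ) ^ (a + 1) * (2 ^ j) ^ (a + 1))) := by
                  ring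
              _ = _ := by
                rw [hch, hyp, Nat.factorial_succ, pow_succ ((a + 1 : ℕ) : ℝ) j]
                push_cast
                field_simp
          rw [e1]
          refine mul_le_mul_of_nonneg_left ?_ (by positivity)
          calc _ ≤ ((a + 1 : ℕ) : ℝ) ^ (j + 1) * ((2 ^ j) ^ (a + 1) / y ^ (a + 1)) *
                Real.exp 1 ^ (a + 1) := mul_le_mul_of_nonneg_left hexp (by positivity)
            _ = _ := by rw [hq, div_pow, mul_pow]; ring
      _ = (m.factorial * K * y ^ (m + 1)) * ∑ a ∈ Finset.range (m + 1),
            (((a + 1 : ℕ) : ℝ) ^ (j + 1) * q ^ (a + 1)) :=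
          (Finset.mul_sum _ _ _).symm
      _ ≤ (m.factorial * K * y ^ (m + 1)) * (m + 1) := by
          refine mul_le_mul_of_nonneg_left ?_ (by positivity)
          have h3 : ∑ a ∈ Finset.range (m + 1), (((a + 1 : ℕ) : ℝ) ^ (j + 1) * q ^ (a + 1)) ≤ σ := by
            have h4 := hsum.sum_le_tsum (Finset.range (m + 2)) (fun i _ => by positivity)
            rw [Finset.sum_range_succ'] at h4
            simpa using h4
          have h5 : (N : ℝ) ≤ m + 1 := by exact_mod_cast (by omega : N ≤ m + 1)
          linarith
      _ = K * (m + 1).factorial * y ^ (m + 1) := by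
          rw [Nat.factorial_succ]; push_cast; ring

/-! ### Counting rooted forests -/

/-- `f` assigns to each vertex of `U` a parent in `U` or one of the roots in `R`, without directed
cycles; acyclicity is witnessed by a rank function that decreases along `f`. -/
def IsRanked {U R : Type} (f : U → U ⊕ R) : Prop :=
  ∃ d : U → ℕ, ∀ u w, f u = Sum.inl w → d w < d u

/-- The binomial identity behind the induction of `le_card_isRanked`. -/
theorem sum_choose_mul_self (M r : ℕ) :
    ∑ s ∈ Finset.range (M + 2), (M + 1).choose s * (r ^ s * (s * (M + 1) ^ (M + 1 - s))) =
      (M + 1) * (r * (M + 1 + r) ^ M) := by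
  rw [Finset.sum_range_succ']
  simp only [zero_mul, mul_zero, add_zero]
  rw [add_comm (M + 1) r, add_pow, Finset.mul_sum, Finset.mul_sum]
  refine Finset.sum_congr rfl fun t _ => ?_
  have := Nat.add_one_mul_choose_eq M t
  rw [Nat.add_sub_add_right, pow_succ]
  calc _ = ((M + 1).choose (t + 1) * (t + 1)) * (r ^ t * r * (M + 1) ^ (M - t)) := by ring
    _ = _ := by rw [← this, Nat.cast_id]; ring

/-- Rooted forests are classified by the set `S` of children of the roots: the vertices of `S`
choose a root freely, and the other vertices form a rooted forest with root set `S`. -/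
theorem sum_le_card_isRanked (U R : Type) [Fintype U] [DecidableEq U] [Finite R] :
    ∑ S : Finset U, Nat.card R ^ S.card *
        Nat.card {g : {u // u ∉ S} → {u // u ∉ S} ⊕ {u // u ∈ S} // IsRanked g} ≤
      Nat.card {f : U → U ⊕ R // IsRanked f} := by
  classical
  let F : (Σ S : Finset U, ({u // u ∈ S} → R) ×
      {g : {u // u ∉ S} → {u // u ∉ S} ⊕ {u // u ∈ S} // IsRanked g}) → (U → U ⊕ R) :=
    fun t u => if h : u ∈ t.1 then Sum.inr (t.2.1 ⟨u, h⟩)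
      else Sum.inl (Sum.elim Subtype.val Subtype.val (t.2.2.1 ⟨u, h⟩))
  have hF : ∀ t, IsRanked (F t) := by
    rintro ⟨S, φ, g, d, hd⟩
    refine ⟨fun u => if h : u ∈ S then 0 else d ⟨u, h⟩ + 1, fun u w huw => ?_⟩
    by_cases hu : u ∈ S
    · simp [F, hu] at huw
    · simp only [F, hu, dite_false, Sum.inl.injEq] at huw ⊢
      rcases hg : g ⟨u, hu⟩ with z | z
      · rw [hg] at huw
        simp only [Sum.elim_inl] at huw
        subst huw
        rw [dif_neg z.2]
        have := hd _ _ hg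
        simpa using this
      · rw [hg] at huw
        simp only [Sum.elim_inr] at huw
        subst huw
        rw [dif_pos z.2]
        omega
  have hmem : ∀ t u, u ∈ t.1 ↔ (F t u).isRight = true := by
    intro t u
    by_cases hu : u ∈ t.1 <;> simp [F, hu]
  have hinj : Function.Injective F := by
    rintro ⟨S, φ, g, hg⟩ ⟨S', φ', g', hg'⟩ h
    have hS : S = S' := by
      ext u
      have h1 := hmem ⟨S, φ, g, hg⟩ u
      have h2 := hmem ⟨S', φ', g', hg'⟩ u
      rw [h1, h2, h]
    subst hS
    have h1 : φ = φ' := by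
      funext u
      have := congrFun h u.1
      simpa [F, u.2] using this
    have h2 : g = g' := by
      funext u
      have := congrFun h u.1
      simp only [F, u.2, dite_false, Sum.inl.injEq] at this
      change Sum.elim Subtype.val Subtype.val (g u) = Sum.elim Subtype.val Subtype.val (g' u) at this
      rcases ha : g u with a | a <;> rcases hb : g' u with b | b <;>
        rw [ha, hb] at this <;> simp only [Sum.elim_inl, Sum.elim_inr] at this
      · rw [Subtype.ext this]
      · exact absurd b.2 (this ▸ a.2)
      · exact absurd a.2 (this ▸ b.2)
      · rw [Subtype.ext this]
    subst h1 h2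
    rfl
  have := Nat.card_le_card_of_injective (fun t => (⟨F t, hF t⟩ : {f : U → U ⊕ R // IsRanked f}))
    (fun a b hab => hinj (congrArg Subtype.val hab))
  rw [Nat.card_sigma] at this
  simpa [Nat.card_prod, Nat.card_fun] using this

/-- On `N` vertices there are at least `r * (N + r) ^ (N - 1)` forests rooted at `r` given roots.
The inequality is multiplied by `N + r` to avoid the exponent `N - 1`. -/
theorem le_card_isRanked (N : ℕ) : ∀ (U R : Type) [Finite U] [Finite R], Nat.card U = N →
    Nat.card R * (N + Nat.card R) ^ N ≤
      Nat.card {f : U → U ⊕ R // IsRanked f} * (N + Nat.card R) := by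
  classical
  induction N using Nat.strong_induction_on with
  | _ N ih =>
  intro U R _ _ hU
  have := Fintype.ofFinite U
  rcases N with _ | M
  · have hE : IsEmpty U := by
      rcases Nat.card_eq_zero.1 hU with h | h
      · exact h
      · exact absurd ‹Finite U› (not_finite_iff_infinite.2 h)
    have : 0 < Nat.card {f : U → U ⊕ R // IsRanked f} := by
      rw [Nat.card_pos_iff]
      exact ⟨⟨⟨fun u => hE.elim u, fun _ => 0, fun u => hE.elim u⟩⟩, inferInstance⟩
    simp only [pow_zero, mul_one, zero_add]
    exact Nat.le_mul_of_pos_left _ this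
  · set r := Nat.card R with hr
    have hterm : ∀ S : Finset U, r ^ S.card * (S.card * (M + 1) ^ (M + 1 - S.card)) ≤
        (r ^ S.card *
        Nat.card {g : {u // u ∉ S} → {u // u ∉ S} ⊕ {u // u ∈ S} // IsRanked g}) * (M + 1) := by
      intro S
      rw [mul_assoc]
      refine Nat.mul_le_mul_left _ ?_
      by_cases h0 : S.card = 0
      · simp [h0]
      · have h1 : Nat.card {u // u ∈ S} = S.card := by simp
        have hle : S.card ≤ M + 1 := by
          rw [← hU, Nat.card_eq_fintype_card]; exact Finset.card_le_univ S
        have h2 : Nat.card {u // u ∉ S} = M + 1 - S.card := by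
          rw [← hU, Nat.card_eq_fintype_card, Nat.card_eq_fintype_card, Fintype.card_subtype_compl,
            Fintype.card_coe]
        have := ih (M + 1 - S.card) (by omega) {u // u ∉ S} {u // u ∈ S} h2
        rwa [h1, Nat.sub_add_cancel hle] at this
    have hsum := Finset.sum_le_sum (s := (Finset.univ : Finset (Finset U))) fun S _ => hterm S
    have hc := Finset.sum_powerset_apply_card
      (fun s => r ^ s * (s * (M + 1) ^ (M + 1 - s))) (x := (Finset.univ : Finset U))
    rw [Finset.powerset_univ, Finset.card_univ, ← Nat.card_eq_fintype_card, hU] at hc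
    simp only [smul_eq_mul] at hc
    rw [hc, sum_choose_mul_self, ← Finset.sum_mul, mul_comm (M + 1)] at hsum
    have h3 := (Nat.le_of_mul_le_mul_right hsum (Nat.succ_pos M)).trans
      (sum_le_card_isRanked U R)
    calc r * (M + 1 + r) ^ (M + 1) = (r * (M + 1 + r) ^ M) * (M + 1 + r) := by ring
      _ ≤ _ := Nat.mul_le_mul_right _ h3

/-! ### Trees with apex vertices -/

/-- The tree on `U ⊕ Unit`, rooted at the point of `Unit`, with parent map `f`. Extending the parent
map by sending the root to itself only adds a loop, which `fromRel` discards. -/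
def rankedTree {U : Type} (f : U → U ⊕ Unit) : SimpleGraph (U ⊕ Unit) :=
  SimpleGraph.fromRel (fun x y => Sum.elim f Sum.inr x = y)

theorem IsRanked.ne {U R : Type} {f : U → U ⊕ R} (hf : IsRanked f) (u : U) : Sum.inl u ≠ f u := by
  obtain ⟨d, hd⟩ := hf
  intro h
  exact lt_irrefl _ (hd u u h.symm)

theorem IsRanked.adj {U : Type} {f : U → U ⊕ Unit} (hf : IsRanked f) (u : U) :
    (rankedTree f).Adj (Sum.inl u) (f u) := by
  rw [rankedTree, SimpleGraph.fromRel_adj]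
  exact ⟨hf.ne u, Or.inl rfl⟩

/-- The graph is connected, as every vertex leads to the root, and it has at most one edge for each
non-root vertex; hence it is a tree. -/
theorem IsRanked.isAcyclic {U : Type} [Finite U] {f : U → U ⊕ Unit} (hf : IsRanked f) :
    (rankedTree f).IsAcyclic := by
  classical
  have hreach : ∀ n u, hf.choose u = n → (rankedTree f).Reachable (Sum.inl u) (Sum.inr ()) := by
    intro n
    induction n using Nat.strong_induction_on with
    | _ n ih =>
    intro u hu
    have h1 := (hf.adj u).reachable
    rcases hfu : f u with w | ⟨⟩
    · have := hf.choose_spec u w hfu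
      rw [hfu] at h1
      exact h1.trans (ih _ (hu ▸ this) w rfl)
    · rwa [hfu] at h1
  have hconn : (rankedTree f).Connected := by
    rw [SimpleGraph.connected_iff_exists_forall_reachable]
    refine ⟨Sum.inr (), ?_⟩
    rintro (u | ⟨⟩)
    · exact (hreach _ u rfl).symm
    · rfl
  have hsub : (rankedTree f).edgeSet ⊆ Set.range (fun u => s(Sum.inl u, f u)) := by
    intro e
    induction e using Sym2.ind with
    | _ x y =>
    rw [SimpleGraph.mem_edgeSet, rankedTree, SimpleGraph.fromRel_adj]
    rintro ⟨hne, h | h⟩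
    · rcases x with u | ⟨⟩
      · exact ⟨u, by rw [← h]; rfl⟩
      · exact absurd h hne
    · rcases y with u | ⟨⟩
      · exact ⟨u, by rw [← h]; exact Sym2.eq_swap⟩
      · exact absurd h.symm hne
  have hcard : Nat.card (rankedTree f).edgeSet ≤ Nat.card U := by
    refine (Nat.card_mono (Set.finite_range _) hsub).trans ?_
    exact Finite.card_range_le _
  have h2 := hconn.card_vert_le_card_edgeSet_add_one
  have h3 : Nat.card (U ⊕ Unit) = Nat.card U + 1 := by simp
  exact (SimpleGraph.isTree_iff_connected_and_card.2 ⟨hconn, by omega⟩).isAcyclic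

/-- If `f u ≠ g u`, the edge from `u` to `w = g u` is in the graph of `f` only as `f w = u`, so
`f` and `g` also differ at `w`, which has smaller rank: infinite descent. -/
theorem rankedTree_injective {U : Type} {f g : U → U ⊕ Unit} (hg : IsRanked g)
    (h : rankedTree f = rankedTree g) : f = g := by
  obtain ⟨d, hd⟩ := id hg
  by_contra hne
  have key : ∀ n u, d u = n → f u = g u := by
    intro n
    induction n using Nat.strong_induction_on with
    | _ n ih =>
    intro u hu
    by_contra hfu
    have h1 := hg.adj u
    rw [← h, rankedTree, SimpleGraph.fromRel_adj] at h1
    rcases h1.2 with h2 | h2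
    · exact hfu h2
    · rcases hgu : g u with w | ⟨⟩
      · rw [hgu] at h2
        have h3 : f w = Sum.inl u := h2
        have h4 := hd u w hgu
        have h5 := ih (d w) (hu ▸ h4) w rfl
        have h6 := hd w u (h5 ▸ h3)
        omega
      · rw [hgu] at h2
        exact absurd h2 (by simp)
  exact hne (funext fun u => key _ u rfl)

/-- The graph `H` together with `j` new, pairwise nonadjacent vertices, the vertex `a` of `H` being
joined to the new vertices with index in `T a`. -/
def apexGraph {V : Type} {j : ℕ} (H : SimpleGraph V) (T : V → Set (Fin j)) :
    SimpleGraph (V ⊕ Fin j) :=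
  SimpleGraph.fromRel (fun x y => match x, y with
    | Sum.inl a, Sum.inl b => H.Adj a b
    | Sum.inl a, Sum.inr i => i ∈ T a
    | _, _ => False)

theorem apexGraph_adj_inl {V : Type} {j : ℕ} (H : SimpleGraph V) (T : V → Set (Fin j)) (a b : V) :
    (apexGraph H T).Adj (Sum.inl a) (Sum.inl b) ↔ H.Adj a b := by
  simp only [apexGraph, SimpleGraph.fromRel_adj, ne_eq, Sum.inl.injEq]
  exact ⟨fun h => h.2.elim id fun h => h.symm, fun h => ⟨h.ne, Or.inl h⟩⟩

theorem apexGraph_adj_inr {V : Type} {j : ℕ} (H : SimpleGraph V) (T : V → Set (Fin j)) (a : V)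
    (i : Fin j) : (apexGraph H T).Adj (Sum.inl a) (Sum.inr i) ↔ i ∈ T a := by
  simp [apexGraph, SimpleGraph.fromRel_adj]

/-- Every component of `G` has a blocker of size at most `j`. -/
def HasBlockers (j n : ℕ) (G : SimpleGraph (Fin n)) : Prop :=
  ∀ C : G.ConnectedComponent,
    ∃ B : Finset (Fin n), (B : Set (Fin n)) ⊆ C.supp ∧ B.card ≤ j ∧
      (G.induce (C.supp \ (B : Set (Fin n)))).IsAcyclic

/-- The apex vertices lying in a component form a blocker of that component. -/
theorem hasBlockers_comap {V : Type} {j n : ℕ} {H : SimpleGraph V} (hH : H.IsAcyclic)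
    (T : V → Set (Fin j)) (e : Fin n ≃ V ⊕ Fin j) :
    HasBlockers j n ((apexGraph H T).comap e) := by
  classical
  intro C
  refine ⟨(Finset.univ.map (Function.Embedding.inr.trans e.symm.toEmbedding)).filter (· ∈ C.supp),
    ?_, ?_, ?_⟩
  · intro x hx
    exact (Finset.mem_filter.1 (Finset.mem_coe.1 hx)).2
  · refine (Finset.card_filter_le _ _).trans ?_
    simp
  · have hinl : ∀ x : ↥(C.supp \ (((Finset.univ.map
        (Function.Embedding.inr.trans e.symm.toEmbedding)).filter (· ∈ C.supp) :
          Finset (Fin n)) : Set (Fin n))), ∃ a : V, e x.1 = Sum.inl a := by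
      rintro ⟨x, hxC, hx⟩
      rcases hex : e x with a | i
      · exact ⟨a, rfl⟩
      · exfalso
        apply hx
        simp only [Finset.coe_filter, Finset.mem_map, Finset.mem_univ, true_and, Set.mem_ofPred_eq]
        exact ⟨⟨i, by simp [← hex]⟩, hxC⟩
    choose φ hφ using hinl
    refine hH.comap ⟨φ, ?_⟩ ?_
    · intro a b hab
      have : (apexGraph H T).Adj (e a.1) (e b.1) := hab
      rwa [hφ, hφ, apexGraph_adj_inl] at this
    · intro a b hab
      have hab : φ a = φ b := hab
      apply Subtype.ext
      apply e.injective
      rw [hφ, hφ, hab]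

/-- Counts the graphs obtained from a tree on `N + 1` vertices by adding `j` apex vertices. -/
theorem le_card_hasBlockers (j N : ℕ) :
    (N + 1) ^ N * (2 ^ j) ^ (N + 1) ≤
      Nat.card {G : SimpleGraph (Fin (N + 1 + j)) // HasBlockers j (N + 1 + j) G} * (N + 1) := by
  classical
  let e : Fin (N + 1 + j) ≃ (Fin N ⊕ Unit) ⊕ Fin j := Fintype.equivOfCardEq (by simp)
  let F : {f : Fin N → Fin N ⊕ Unit // IsRanked f} × (Fin N ⊕ Unit → Set (Fin j)) →
      {G : SimpleGraph (Fin (N + 1 + j)) // HasBlockers j (N + 1 + j) G} := fun t =>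
    ⟨(apexGraph (rankedTree t.1.1) t.2).comap e, hasBlockers_comap t.1.2.isAcyclic _ _⟩
  have hinj : Function.Injective F := by
    rintro ⟨⟨f, hf⟩, T⟩ ⟨⟨g, hg⟩, T'⟩ h
    have h0 : apexGraph (rankedTree f) T = apexGraph (rankedTree g) T' := by
      have h1 : (apexGraph (rankedTree f) T).comap e = (apexGraph (rankedTree g) T').comap e :=
        congrArg Subtype.val h
      ext x y
      have h2 : ((apexGraph (rankedTree f) T).comap e).Adj (e.symm x) (e.symm y) ↔
        ((apexGraph (rankedTree g) T').comap e).Adj (e.symm x) (e.symm y) := by rw [h1]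
      simpa using h2
    have hfg : f = g := by
      apply rankedTree_injective hg
      ext x y
      rw [← apexGraph_adj_inl _ T, h0, apexGraph_adj_inl]
    have hT : T = T' := by
      funext a
      ext i
      rw [← apexGraph_adj_inr (rankedTree f) T, h0, apexGraph_adj_inr]
    subst hfg hT
    rfl
  have h1 := Nat.card_le_card_of_injective F hinj
  have h2 : Nat.card (Set (Fin j)) = 2 ^ j := by
    rw [Nat.card_eq_fintype_card, Fintype.card_set, Fintype.card_fin]
  have h3 : Nat.card (Fin N ⊕ Unit) = N + 1 := by simp
  rw [Nat.card_prod, Nat.card_fun, h2, h3] at h1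
  have h4 := le_card_isRanked N (Fin N) Unit (by simp)
  simp only [Nat.card_unique, one_mul] at h4
  calc _ ≤ _ := Nat.mul_le_mul_right _ h4
    _ = _ := by ring
    _ ≤ _ := Nat.mul_le_mul_right _ h1

/-! ### Asymptotics -/

/-- The elementary form `n! ≤ e * n * (n / e) ^ n` of Stirling's upper bound, with `n = m + 1`. The
induction step is `e ≤ (1 + 1 / n) ^ (n + 1)`. -/
theorem factorial_mul_exp_le (m : ℕ) :
    ((m + 1).factorial : ℝ) * Real.exp 1 ^ (m + 1) ≤ Real.exp 1 * ((m + 1 : ℕ) : ℝ) ^ (m + 2) := by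
  induction m with
  | zero => simp
  | succ m ih =>
    set x : ℝ := ((m + 1 : ℕ) : ℝ) with hx
    have hx0 : 0 < x := by positivity
    have hcast : ((m + 1 + 1 : ℕ) : ℝ) = x + 1 := by rw [hx]; push_cast; ring
    have he : Real.exp 1 * x ^ (m + 2) ≤ (x + 1) ^ (m + 2) := by
      have h1 : Real.exp (-(x + 1)⁻¹) ≥ x / (x + 1) := by
        have := Real.add_one_le_exp (-(x + 1)⁻¹)
        have h2 : -(x + 1)⁻¹ + 1 = x / (x + 1) := by field_simp; ring
        linarith
      have h3 : (x / (x + 1)) ^ (m + 2) ≤ Real.exp (-(x + 1)⁻¹) ^ (m + 2) :=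
        pow_le_pow_left₀ (by positivity) h1 _
      have h4 : Real.exp (-(x + 1)⁻¹) ^ (m + 2) = Real.exp (-1) := by
        rw [← Real.exp_nat_mul]
        congr 1
        have : ((m + 2 : ℕ) : ℝ) = x + 1 := hcast
        rw [this]; field_simp
      rw [h4, div_pow, div_le_iff₀ (by positivity)] at h3
      calc Real.exp 1 * x ^ (m + 2) ≤ Real.exp 1 * (Real.exp (-1) * (x + 1) ^ (m + 2)) :=
            mul_le_mul_of_nonneg_left h3 (Real.exp_pos _).le
        _ = (x + 1) ^ (m + 2) := by rw [← mul_assoc, ← Real.exp_add]; simp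
    rw [Nat.factorial_succ, Nat.cast_mul, hcast]
    calc (x + 1) * ((m + 1).factorial : ℝ) * Real.exp 1 ^ (m + 1 + 1)
        = (x + 1) * Real.exp 1 * (((m + 1).factorial : ℝ) * Real.exp 1 ^ (m + 1)) := by ring
      _ ≤ (x + 1) * Real.exp 1 * (Real.exp 1 * x ^ (m + 2)) :=
          mul_le_mul_of_nonneg_left ih (by positivity)
      _ ≤ (x + 1) * Real.exp 1 * (x + 1) ^ (m + 2) :=
          mul_le_mul_of_nonneg_left he (by positivity)
      _ = _ := by ring

theorem lower_bound (j m : ℕ) :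
    (2 ^ j * Real.exp 1) ^ (m + 1) * ((m + 1 + j).factorial : ℝ) ≤
      Nat.card {G : SimpleGraph (Fin (m + 1 + j)) // HasBlockers j (m + 1 + j) G} *
        (Real.exp 1 * ((m + 1 + j : ℕ) : ℝ) ^ (j + 3)) := by
  set A : ℝ :=
    ((Nat.card {G : SimpleGraph (Fin (m + 1 + j)) // HasBlockers j (m + 1 + j) G} : ℕ) : ℝ) with hA
  have h1 : ((m + 1 : ℕ) : ℝ) ^ m * (2 ^ j) ^ (m + 1) ≤ A * ((m + 1 : ℕ) : ℝ) := by
    rw [hA]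
    exact_mod_cast le_card_hasBlockers j m
  have h2 : ((m + 1 + j).factorial : ℝ) ≤
      (m + 1).factorial * ((m + 1 + j : ℕ) : ℝ) ^ j := by
    rw [← Nat.factorial_mul_ascFactorial]
    have := Nat.ascFactorial_le_pow_add (m + 1) j
    exact_mod_cast Nat.mul_le_mul_left _ this
  have h3 := factorial_mul_exp_le m
  set x : ℝ := ((m + 1 : ℕ) : ℝ) with hx
  set z : ℝ := ((m + 1 + j : ℕ) : ℝ) with hz
  have hxz : x ≤ z := by rw [hx, hz]; exact_mod_cast Nat.le_add_right _ _
  have hx0 : 0 ≤ x := by positivity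
  have hz0 : 0 ≤ z := by positivity
  have hA0 : 0 ≤ A := by positivity
  calc (2 ^ j * Real.exp 1) ^ (m + 1) * ((m + 1 + j).factorial : ℝ)
      ≤ (2 ^ j * Real.exp 1) ^ (m + 1) * ((m + 1).factorial * z ^ j) :=
        mul_le_mul_of_nonneg_left h2 (by positivity)
    _ = ((m + 1).factorial * Real.exp 1 ^ (m + 1)) * ((2 ^ j) ^ (m + 1) * z ^ j) := by
        rw [mul_pow]; ring
    _ ≤ (Real.exp 1 * x ^ (m + 2)) * ((2 ^ j) ^ (m + 1) * z ^ j) :=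
        mul_le_mul_of_nonneg_right h3 (by positivity)
    _ = (x ^ m * (2 ^ j) ^ (m + 1)) * (Real.exp 1 * x ^ 2 * z ^ j) := by ring
    _ ≤ (A * x) * (Real.exp 1 * x ^ 2 * z ^ j) :=
        mul_le_mul_of_nonneg_right h1 (by positivity)
    _ = A * (Real.exp 1 * (x ^ 3 * z ^ j)) := by ring
    _ ≤ A * (Real.exp 1 * (z ^ 3 * z ^ j)) := by gcongr
    _ = _ := by ring

/-- A sequence that is at least `ρ ^ n` up to a polynomial factor, and at most `K * y ^ n` for every
`y > ρ`, has `n`-th roots tending to `ρ`. -/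
theorem tendsto_root_of_bounds {b : ℕ → ℝ} {ρ c : ℝ} {p : ℕ} (hρ : 0 < ρ) (hc : 0 < c)
    (hb : ∀ n, 0 ≤ b n) (hlow : ∀ᶠ n : ℕ in atTop, c * ρ ^ n / (n : ℝ) ^ p ≤ b n)
    (hup : ∀ y, ρ < y → ∃ K : ℝ, 0 < K ∧ ∀ n, b n ≤ K * y ^ n) :
    Tendsto (fun n : ℕ => b n ^ ((n : ℝ)⁻¹)) atTop (nhds ρ) := by
  have hconst : ∀ K : ℝ, 0 < K → Tendsto (fun n : ℕ => K ^ ((n : ℝ)⁻¹)) atTop (nhds 1) := by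
    intro K hK
    have := (Real.continuousAt_const_rpow (a := K) (b := 0) hK.ne').tendsto.comp
      (tendsto_inv_atTop_nhds_zero_nat (𝕜 := ℝ))
    simpa [Function.comp_def] using this
  have hn : Tendsto (fun n : ℕ => (n : ℝ) ^ ((n : ℝ)⁻¹)) atTop (nhds 1) := by
    have := tendsto_rpow_div.comp (tendsto_natCast_atTop_atTop (R := ℝ))
    simpa [Function.comp_def] using this
  have hpow : ∀ (y : ℝ) (n : ℕ), 0 ≤ y → n ≠ 0 → (y ^ n) ^ ((n : ℝ)⁻¹) = y :=
    fun y n hy hn0 => Real.pow_rpow_inv_natCast hy hn0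
  rw [tendsto_order]
  constructor
  · intro a ha
    have hlim : Tendsto (fun n : ℕ => c ^ ((n : ℝ)⁻¹) * ρ / ((n : ℝ) ^ ((n : ℝ)⁻¹)) ^ p) atTop
        (nhds ρ) := by
      have := ((hconst c hc).mul_const ρ).div (hn.pow p) (by simp)
      simpa [Pi.div_def] using this
    filter_upwards [hlow, hlim.eventually_const_lt ha, eventually_ge_atTop 1] with n h1 h2 h3
    refine h2.trans_le ?_
    have h4 := Real.rpow_le_rpow (by positivity) h1 (by positivity : (0 : ℝ) ≤ (n : ℝ)⁻¹)
    rw [Real.div_rpow (by positivity) (by positivity), Real.mul_rpow hc.le (by positivity),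
      hpow ρ n hρ.le (by omega), ← Real.rpow_natCast (n : ℝ) p, ← Real.rpow_mul (by positivity),
      mul_comm (p : ℝ), Real.rpow_mul (by positivity), Real.rpow_natCast] at h4
    exact h4
  · intro a ha
    obtain ⟨y, hy1, hy2⟩ := exists_between ha
    obtain ⟨K, hK, hKb⟩ := hup y hy1
    have hy0 : 0 < y := hρ.trans hy1
    have hlim : Tendsto (fun n : ℕ => K ^ ((n : ℝ)⁻¹) * y) atTop (nhds y) := by
      simpa using (hconst K hK).mul_const y
    filter_upwards [hlim.eventually_lt_const hy2, eventually_ge_atTop 1] with n h2 h3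
    refine lt_of_le_of_lt ?_ h2
    have h4 := Real.rpow_le_rpow (hb n) (hKb n) (by positivity : (0 : ℝ) ≤ (n : ℝ)⁻¹)
    rwa [Real.mul_rpow hK.le (by positivity), hpow y n hy0.le (by omega)] at h4

theorem tendsto_hasBlockers (j : ℕ) :
    Tendsto (fun n : ℕ => ((Nat.card {G : SimpleGraph (Fin n) // HasBlockers j n G} : ℝ) /
      (Nat.factorial n : ℝ)) ^ ((n : ℝ)⁻¹)) atTop (nhds (2 ^ j * Real.exp 1)) := by
  set ρ : ℝ := 2 ^ j * Real.exp 1 with hρ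
  have hρ0 : 0 < ρ := by positivity
  refine tendsto_root_of_bounds (c := (ρ ^ j * Real.exp 1)⁻¹) (p := j + 3) hρ0 (by positivity)
    (fun n => by positivity) ?_ ?_
  · filter_upwards [eventually_ge_atTop (j + 1)] with n hn
    obtain ⟨m, rfl⟩ : ∃ m, n = m + 1 + j := ⟨n - (j + 1), by omega⟩
    have := lower_bound j m
    rw [← hρ] at this
    rw [div_le_div_iff₀ (by positivity) (by positivity), pow_add ρ (m + 1) j]
    calc _ = (ρ ^ (m + 1) * ((m + 1 + j).factorial : ℝ)) * (Real.exp 1)⁻¹ := by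
          field_simp
      _ ≤ _ := mul_le_mul_of_nonneg_right this (by positivity)
      _ = _ := by field_simp
  · intro y hy
    obtain ⟨K, hK, h⟩ := exists_card_allEnc_le j y hy
    refine ⟨K, hK, fun n => ?_⟩
    rw [div_le_iff₀ (by positivity)]
    have h1 : Nat.card {G : SimpleGraph (Fin n) // HasBlockers j n G} ≤
        Nat.card {G : SimpleGraph (Fin n) // AllEnc j G} :=
      Nat.card_le_card_of_injective
        (fun G => (⟨G.1, allEnc_of_blockers G.2⟩ : {G : SimpleGraph (Fin n) // AllEnc j G}))
        (fun a b hab => Subtype.ext (congrArg (fun G => G.1) hab))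
    calc _ ≤ (Nat.card {G : SimpleGraph (Fin n) // AllEnc j G} : ℝ) := by exact_mod_cast h1
      _ ≤ K * n.factorial * y ^ n := h n (Fin n) (by simp)
      _ = _ := by ring

/-- the class of graphs all of whose components have a blocker of size at
most k−1 has growth constant 2^{k−1} e. -/
theorem stmt_18 (k : ℕ) (hk : 1 ≤ k) :
    Filter.Tendsto
      (fun n : ℕ =>
        ((Nat.card {G : SimpleGraph (Fin n) // ∀ C : G.ConnectedComponent,
            ∃ B : Finset (Fin n), (B : Set (Fin n)) ⊆ C.supp ∧ B.card ≤ k - 1 ∧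
              (G.induce (C.supp \ (B : Set (Fin n)))).IsAcyclic} : ℝ) /
          (Nat.factorial n : ℝ)) ^ ((n : ℝ)⁻¹))
      Filter.atTop (nhds (2 ^ (k - 1) * Real.exp 1)) := by
  exact tendsto_hasBlockers (k - 1)
end
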